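/- Let (G,T) be a bipartite graft, F a minimum join of (G,T), and r ∈ V(G). Let K be a decapital distance component of (G,T) with respect to r, with F-root r_K. Let r' ∈ V(G)\V(K) be K-congruent to r. Then for every vertex x outside K that is adjacent in G to a vertex of K, dist_F(r', x) = dist_F(r', r_K) + 1. -/

import Mathlib

/-!
Edge sets are treated through their `𝔽₂`-boundary: a join is an edge set with boundary the indicator
of `T`, and toggling a path from `x` to `y` in a minimum join `F` shows that
`dist_F(x, y) + |F|` is the minimum size of an edge set with boundary `bd F + x + y` (`dist_le`,
`dist_attain`). For fixed `r` this number, as a function of `x`, is the potential `lam x` of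
`PotSys`; since `G` is bipartite it changes by exactly one along each edge in the component of `r`,
and the distance components are the components of its lower level sets.

Sebő's structure theorem is proved in this language. An edge set of minimum size with boundary
`bd F + r + x` is called optimal with root `x`. Optimal sets rooted inside a component have no edge
leaving it (`PotSys.tight`, by induction on the size of the component), and those rooted outside
have exactly one (`PotSys.unique_cut`). Consequently an optimal set is charged edge by edge to
pairwise different components with odd boundary, and every other edge set with odd boundary on the
same components is at least as large (`PotSys.count`). This gives two lower bounds for a component
`K` of level `i`. The part inside `K` of an optimal set with root in `K` at the top level has some
size `α`, and is minimum even when its boundary may be changed at vertices of `K` of level `i`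
(`PotSys.in_bound`). The part of `F` outside `K` is minimum even when its boundary may be changed
at outer neighbours of `K` (`PotSys.out_bound`).

Let now `D x` be the minimum size of an edge set with boundary `bd F + r' + x`, let `pq` be the beam
of `K` with `p ∈ K`, and let `x ∉ K` be a neighbour of `K`. In a minimum set for `x` the inner part
has size at least `α`, and at least one edge leaves `K` by parity. Its outer part has size at least
`D p - α`: exchange it with the outer part of `F`, using the outer bound and `D p = D q - 1`, which
is the congruence of `r'` and `r`. Hence `D x ≥ D p + 1`. The same count for a minimum set for `p`
leaves no room for an edge leaving `K`, so its outer part, an edge from `x` to a vertex `y` of `K`,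
and an inner part rooted at `y` form a set for `x` of size `D p + 1` (`PotSys.main`).
-/

namespace TightCuts

open SimpleGraph

variable {V : Type*}

/-- `(G, T)` is a graft: every connected component of `G` contains an even
number of vertices of `T`. -/
def IsGraft (G : SimpleGraph V) (T : Set V) : Prop :=
  ∀ c : G.ConnectedComponent, Even ((T ∩ {v | G.connectedComponentMk v = c}).ncard)

/-- `F` is a join of the graft `(G, T)`: a set of edges such that a vertex is
incident with an odd number of edges of `F` exactly when it lies in `T`. -/
def IsJoin (G : SimpleGraph V) (T : Set V) (F : Set (Sym2 V)) : Prop :=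
  F ⊆ G.edgeSet ∧ ∀ v : V, (Odd ({e ∈ F | v ∈ e}).ncard ↔ v ∈ T)

/-- `ν(G, T)`: the minimum size of a join of `(G, T)`. -/
noncomputable def nu (G : SimpleGraph V) (T : Set V) : ℕ :=
  sInf {n | ∃ F : Set (Sym2 V), IsJoin G T F ∧ F.ncard = n}

/-- `F` is a minimum join of `(G, T)`. -/
def IsMinJoin (G : SimpleGraph V) (T : Set V) (F : Set (Sym2 V)) : Prop :=
  IsJoin G T F ∧ F.ncard = nu G T

open Classical in
/-- The `F`-weight of an edge: `-1` if the edge lies in `F`, `+1` otherwise. -/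
noncomputable def edgeWt (F : Set (Sym2 V)) (e : Sym2 V) : ℤ :=
  if e ∈ F then -1 else 1

/-- The `F`-weight of a walk: the sum of the `F`-weights of its edges. -/
noncomputable def walkWt (F : Set (Sym2 V)) {G : SimpleGraph V} {x y : V}
    (p : G.Walk x y) : ℤ :=
  (p.edges.map (edgeWt F)).sum

/-- The `F`-distance between `x` and `y`: the minimum `F`-weight of a path
between `x` and `y`. -/
noncomputable def distF (G : SimpleGraph V) (F : Set (Sym2 V)) (x y : V) : ℤ :=
  sInf {n : ℤ | ∃ p : G.Walk x y, p.IsPath ∧ walkWt F p = n}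

/-- `K` is (the vertex set of) a connected component of the subgraph of `G`
induced by `U`. -/
def IsComponentOf (G : SimpleGraph V) (U K : Set V) : Prop :=
  K.Nonempty ∧ K ⊆ U ∧ (G.induce K).Connected ∧
    ∀ x ∈ K, ∀ y ∈ U, G.Adj x y → y ∈ K

/-- `K` is a distance component of the graft with respect to root `r` at level `i`
(with respect to a minimum join `F`): `i` is attained as an `F`-distance from `r`,
and `K` is a connected component of the subgraph induced by the vertices at
`F`-distance at most `i` from `r`. -/
def IsDistCompAt (G : SimpleGraph V) (F : Set (Sym2 V)) (r : V) (i : ℤ) (K : Set V) : Prop :=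
  (∃ x, distF G F r x = i) ∧ IsComponentOf G {x | distF G F r x ≤ i} K

/-- `K` is a decapital distance component with respect to root `r`: a distance
component (at some level) not containing `r`. -/
def IsDecapDistComp (G : SimpleGraph V) (F : Set (Sym2 V)) (r : V) (K : Set V) : Prop :=
  ∃ i : ℤ, IsDistCompAt G F r i K ∧ r ∉ K

/-- The edge cut `δ_G(K)`: edges of `G` with exactly one end in `K`. -/
def cutEdges (G : SimpleGraph V) (K : Set V) : Set (Sym2 V) :=
  {e | e ∈ G.edgeSet ∧ ∃ x y, e = s(x, y) ∧ x ∈ K ∧ y ∉ K}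

/-- An edge is allowed in `(G, T)` if some minimum join contains it. -/
def Allowed (G : SimpleGraph V) (T : Set V) (e : Sym2 V) : Prop :=
  ∃ F, IsMinJoin G T F ∧ e ∈ F

/-- Two vertices are factor-connected if there is a walk between them all of
whose edges are allowed. -/
def FactorConnected (G : SimpleGraph V) (T : Set V) (u v : V) : Prop :=
  ∃ p : G.Walk u v, ∀ e ∈ p.edges, Allowed G T e

/-- `C` is (the vertex set of) a factor-component of `(G, T)`: an equivalence
class of factor-connectivity. -/
def IsFactorComponent (G : SimpleGraph V) (T : Set V) (C : Set V) : Prop :=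
  ∃ v, C = {u | FactorConnected G T u v}

/-- The Kotzig–Lovász relation: `u ∼ v` iff `u = v`, or `u` and `v` are
factor-connected (hence in the same factor-component) and
`ν(G, T) = ν(G, T Δ {u, v})`. -/
def klRel (G : SimpleGraph V) (T : Set V) (u v : V) : Prop :=
  u = v ∨ (FactorConnected G T u v ∧ nu G T = nu G (symmDiff T {u, v}))

/-- `S` is a Kotzig–Lovász class of `(G, T)`. -/
def IsKLClass (G : SimpleGraph V) (T : Set V) (S : Set V) : Prop :=
  ∃ v, S = {u | klRel G T u v}

/-- `A(K)` for a distance component `K` at level `i`: the vertices of `K` at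
`F`-distance exactly `i` from `r`. -/
def AK (G : SimpleGraph V) (F : Set (Sym2 V)) (r : V) (i : ℤ) (K : Set V) : Set V :=
  K ∩ {x | distF G F r x = i}

/-- `D(K) = V(K) \ A(K)`. -/
def DK (G : SimpleGraph V) (F : Set (Sym2 V)) (r : V) (i : ℤ) (K : Set V) : Set V :=
  K \ AK G F r i K

/-- `S` is the root class of `K`: a Kotzig–Lovász class containing all ends in
`K` of allowed edges of the cut `δ_G(K)`. -/
def IsRootClass (G : SimpleGraph V) (T : Set V) (K S : Set V) : Prop :=
  IsKLClass G T S ∧ ∀ e ∈ cutEdges G K, Allowed G T e → ∀ u ∈ e, u ∈ K → u ∈ S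

/-- `S` is the antiroot class of `K`: a Kotzig–Lovász class containing all ends
outside `K` of allowed edges of the cut `δ_G(K)`. -/
def IsAntirootClass (G : SimpleGraph V) (T : Set V) (K S : Set V) : Prop :=
  IsKLClass G T S ∧ ∀ e ∈ cutEdges G K, Allowed G T e → ∀ u ∈ e, u ∉ K → u ∈ S

/-- The family `𝒜(K)`: the root fragment `K ∩ S_K` together with all
Kotzig–Lovász classes other than `S_K` that contain a vertex of `A(K)`. -/
def famA (G : SimpleGraph V) (T : Set V) (F : Set (Sym2 V)) (r : V) (i : ℤ)
    (K S_K : Set V) : Set (Set V) :=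
  insert (K ∩ S_K) {S | IsKLClass G T S ∧ S ≠ S_K ∧ (S ∩ AK G F r i K).Nonempty}

/-- `L` is adjacent to a vertex of `S` by an allowed edge. -/
def AdjAllowed (G : SimpleGraph V) (T : Set V) (L S : Set V) : Prop :=
  ∃ x ∈ L, ∃ s ∈ S, G.Adj x s ∧ Allowed G T s(x, s)

/-- `𝒩_K(S)`: the family of connected components of `G[D(K)]` adjacent to a
vertex of `S` by an allowed edge. -/
def NKfam (G : SimpleGraph V) (T : Set V) (F : Set (Sym2 V)) (r : V) (i : ℤ)
    (K S : Set V) : Set (Set V) :=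
  {L | IsComponentOf G (DK G F r i K) L ∧ AdjAllowed G T L S}

/-- `U_K(S)`: the union of the vertex sets of the members of `𝒩_K(S)`. -/
def UK (G : SimpleGraph V) (T : Set V) (F : Set (Sym2 V)) (r : V) (i : ℤ)
    (K S : Set V) : Set V :=
  ⋃₀ NKfam G T F r i K S

/-- `X` is an `F`-negative set for `S`: `X` is disjoint from `S` and every
`x ∈ X` admits a path of negative `F`-weight from `x` to a vertex of `S` whose
vertices, except the end in `S`, all lie in `X`. -/
def IsNegSet (G : SimpleGraph V) (F : Set (Sym2 V)) (S X : Set V) : Prop :=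
  X ⊆ Sᶜ ∧ ∀ x ∈ X, ∃ y ∈ S, ∃ p : G.Walk x y, p.IsPath ∧ walkWt F p < 0 ∧
    ∀ v ∈ p.support, v ≠ y → v ∈ X

/-- The maximum `F`-negative set for `S`: the union of all `F`-negative sets
for `S`. -/
def maxNegSet (G : SimpleGraph V) (F : Set (Sym2 V)) (S : Set V) : Set V :=
  ⋃₀ {X | IsNegSet G F S X}

/-- The maximum `F`-negative set for `S` avoiding `Y`. -/
def maxNegSetAvoiding (G : SimpleGraph V) (F : Set (Sym2 V)) (S Y : Set V) : Set V :=
  ⋃₀ {X | IsNegSet G F S X ∧ Disjoint X Y}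

/-! ### Boundaries of edge sets over `𝔽₂` -/

open Classical in
/-- The boundary over `𝔽₂` of an edge: the sum of its two ends. A loop has boundary `0`. -/
noncomputable def bdE (e : Sym2 V) : V → ZMod 2 :=
  Sym2.lift ⟨fun a b => Pi.single a 1 + Pi.single b 1, fun _ _ => add_comm _ _⟩ e

/-- The boundary over `𝔽₂` of an edge set: the indicator function of its odd-degree vertices. -/
noncomputable def bd (J : Finset (Sym2 V)) : V → ZMod 2 := ∑ e ∈ J, bdE e

open Classical in
/-- The indicator function of a single vertex, as an `𝔽₂`-chain. -/
noncomputable def pt (a : V) : V → ZMod 2 := Pi.single a 1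

/-- The restriction of an `𝔽₂`-chain to a vertex set, extended by zero. -/
noncomputable def res (K : Set V) (f : V → ZMod 2) : V → ZMod 2 := K.indicator f

open Classical in
/-- The edges of `J` with both ends in `K`. -/
noncomputable def inE (K : Set V) (J : Finset (Sym2 V)) : Finset (Sym2 V) :=
  J.filter (fun e => ∀ v ∈ e, v ∈ K)

open Classical in
/-- The edges of `J` with both ends outside `K`. -/
noncomputable def outE (K : Set V) (J : Finset (Sym2 V)) : Finset (Sym2 V) :=
  J.filter (fun e => ∀ v ∈ e, v ∉ K)

open Classical in
/-- The edges of `J` with exactly one end in `K`. -/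
noncomputable def cutE (K : Set V) (J : Finset (Sym2 V)) : Finset (Sym2 V) :=
  J.filter (fun e => ∃ a b, e = s(a, b) ∧ a ∈ K ∧ b ∉ K)

/-- The numeral `2` is the zero chain, which lets `grind` compute in characteristic two. -/
lemma two_chain : (OfNat.ofNat 2 : V → ZMod 2) = 0 := by
  funext v
  exact CharTwo.two_eq_zero

lemma chain_add_self (f : V → ZMod 2) : f + f = 0 := by
  funext v
  exact CharTwo.add_self_eq_zero _

lemma bdE_mk (a b : V) : bdE s(a, b) = pt a + pt b := rfl

lemma pt_self (a : V) : pt a a = 1 := by simp [pt]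

lemma pt_ne {a b : V} (h : a ≠ b) : pt a b = 0 := by simp [pt, h.symm]

lemma pt_ne_zero {a b : V} (h : pt a b ≠ 0) : b = a := by
  by_contra h'
  exact h (pt_ne (Ne.symm h'))

lemma bdE_ne_zero {e : Sym2 V} {s : V} (h : bdE e s ≠ 0) : ∃ b, e = s(s, b) := by
  induction e using Sym2.ind with
  | _ a b =>
    rw [bdE_mk, Pi.add_apply] at h
    by_cases ha : a = s
    · exact ⟨b, by rw [ha]⟩
    · by_cases hb : b = s
      · exact ⟨a, by rw [hb, Sym2.eq_swap]⟩
      · exact absurd (by rw [pt_ne ha, pt_ne hb, add_zero]) h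

lemma bd_ne_zero {J : Finset (Sym2 V)} {s : V} (h : bd J s ≠ 0) : ∃ b, s(s, b) ∈ J := by
  rw [bd, Finset.sum_apply] at h
  obtain ⟨e, he, h'⟩ := Finset.exists_ne_zero_of_sum_ne_zero h
  obtain ⟨b, rfl⟩ := bdE_ne_zero h'
  exact ⟨b, he⟩

lemma bd_empty : bd (∅ : Finset (Sym2 V)) = 0 := rfl

lemma bd_single (a b : V) : bd {s(a, b)} = pt a + pt b := by simp [bd, bdE_mk]

section
open Classical

lemma bd_union {A B : Finset (Sym2 V)} (h : Disjoint A B) : bd (A ∪ B) = bd A + bd B :=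
  Finset.sum_union h

lemma bd_sdiff {A B : Finset (Sym2 V)} (h : B ⊆ A) : bd (A \ B) = bd A + bd B := by
  have := bd_union (Finset.sdiff_disjoint (s := B) (t := A))
  rw [Finset.sdiff_union_of_subset h] at this
  grind [two_chain (V := V)]

lemma bd_erase {A : Finset (Sym2 V)} {a b : V} (h : s(a, b) ∈ A) :
    bd (A.erase s(a, b)) = bd A + pt a + pt b := by
  rw [← Finset.sdiff_singleton_eq_erase, bd_sdiff (by simpa using h), bd_single, add_assoc]

lemma bd_insert {A : Finset (Sym2 V)} {a b : V} (h : s(a, b) ∉ A) :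
    bd (insert s(a, b) A) = bd A + pt a + pt b := by
  rw [bd, Finset.sum_insert h, bdE_mk, bd]
  ring

lemma bd_symmDiff (A B : Finset (Sym2 V)) : bd (symmDiff A B) = bd A + bd B := by
  have h1 : bd (symmDiff A B) = bd (A \ B) + bd (B \ A) :=
    bd_union (Finset.disjoint_left.2 (by grind))
  have h2 : bd (A \ B) + bd (A ∩ B) = bd A := by
    rw [← bd_union (Finset.disjoint_left.2 (by grind)), Finset.sdiff_union_inter]
  have h3 : bd (B \ A) + bd (A ∩ B) = bd B := by
    rw [Finset.inter_comm, ← bd_union (Finset.disjoint_left.2 (by grind)),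
      Finset.sdiff_union_inter]
  grind [two_chain (V := V)]

/-- For `J ⊆ A ∆ B`, the change of size caused by toggling `J` in `B` is additive over the
partition of `A ∆ B` into `J` and its complement. -/
lemma card_toggle {A B J : Finset (Sym2 V)} (h : J ⊆ symmDiff A B) :
    (symmDiff B J).card + (symmDiff B (symmDiff A B \ J)).card = A.card + B.card := by
  have e1 : symmDiff B J ∪ symmDiff B (symmDiff A B \ J) = A ∪ B := by
    ext x; have := @h x; simp only [Finset.mem_symmDiff, Finset.mem_union, Finset.mem_sdiff] at *
    tauto
  have e2 : symmDiff B J ∩ symmDiff B (symmDiff A B \ J) = A ∩ B := by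
    ext x; have := @h x; simp only [Finset.mem_symmDiff, Finset.mem_inter, Finset.mem_sdiff] at *
    tauto
  rw [← Finset.card_union_add_card_inter, e1, e2, Finset.card_union_add_card_inter]

/-- Extraction of a connection: if the boundary of `J` is `s` plus a chain `f`, then part of `J`
connects `s` to a vertex in the support of `f`. -/
lemma exists_connection (J : Finset (Sym2 V)) (s : V) (f : V → ZMod 2) (h : bd J = pt s + f) :
    ∃ J₁ ⊆ J, ∃ s', f s' ≠ 0 ∧ bd J₁ = pt s + pt s' := by
  induction hn : J.card generalizing J s with
  | zero =>
    rw [Finset.card_eq_zero] at hn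
    subst hn
    refine ⟨∅, subset_rfl, s, ?_, ?_⟩
    · have h' := congrFun h s
      simp only [bd_empty, Pi.add_apply, pt_self, Pi.zero_apply] at h'
      intro h0
      simp [h0] at h'
    · rw [bd_empty, chain_add_self]
  | succ n ih =>
    by_cases hf : f s = 0
    · have hs : bd J s ≠ 0 := by simp [h, pt_self, hf]
      obtain ⟨b, hb⟩ := bd_ne_zero hs
      have e1 := bd_erase hb
      obtain ⟨J₁, hJ, s', hs', hb'⟩ := ih (J.erase s(s, b)) b
        (by rw [e1, h]; grind [two_chain (V := V)]) (by rw [Finset.card_erase_of_mem hb, hn]; rfl)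
      have hnot : s(s, b) ∉ J₁ := fun h => by simpa using hJ h
      refine ⟨insert s(s, b) J₁, ?_, s', hs', ?_⟩
      · exact Finset.insert_subset hb (hJ.trans (Finset.erase_subset _ _))
      · rw [bd_insert hnot, hb']; grind [two_chain (V := V)]
    · exact ⟨∅, Finset.empty_subset _, s, hf, by rw [bd_empty, chain_add_self]⟩

lemma res_add (K : Set V) (f g : V → ZMod 2) : res K (f + g) = res K f + res K g :=
  Set.indicator_add K f g

lemma res_add_compl (K : Set V) (f : V → ZMod 2) : res K f + res Kᶜ f = f :=
  Set.indicator_self_add_compl K f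

lemma res_pt_mem {K : Set V} {a : V} (h : a ∈ K) : res K (pt a) = pt a := by
  funext v
  simp only [res, Set.indicator_apply]
  split_ifs with hv
  · rfl
  · rw [pt_ne]; rintro rfl; exact hv h

lemma res_pt_notMem {K : Set V} {a : V} (h : a ∉ K) : res K (pt a) = 0 := by
  funext v
  simp only [res, Set.indicator_apply, Pi.zero_apply]
  split_ifs with hv
  · rw [pt_ne]; rintro rfl; exact h hv
  · rfl

lemma res_compl_pt_mem {K : Set V} {a : V} (h : a ∈ K) : res Kᶜ (pt a) = 0 :=
  res_pt_notMem (by simpa using h)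

lemma res_compl_pt_notMem {K : Set V} {a : V} (h : a ∉ K) : res Kᶜ (pt a) = pt a :=
  res_pt_mem (by simpa using h)

lemma res_zero_of {K : Set V} {f : V → ZMod 2} (h : ∀ v ∈ K, f v = 0) : res K f = 0 := by
  funext v
  simp only [res, Set.indicator_apply, Pi.zero_apply]
  split_ifs with hv
  · exact h v hv
  · rfl

lemma bd_zero_of {J : Finset (Sym2 V)} {v : V} (h : ∀ b, s(v, b) ∉ J) : bd J v = 0 := by
  by_contra h'
  obtain ⟨b, hb⟩ := bd_ne_zero h'
  exact h b hb

lemma mem_inE {K : Set V} {J : Finset (Sym2 V)} {a b : V} :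
    s(a, b) ∈ inE K J ↔ s(a, b) ∈ J ∧ a ∈ K ∧ b ∈ K := by
  simp [inE]

lemma mem_outE {K : Set V} {J : Finset (Sym2 V)} {a b : V} :
    s(a, b) ∈ outE K J ↔ s(a, b) ∈ J ∧ a ∉ K ∧ b ∉ K := by
  simp [outE]

lemma mem_cutE_of {K : Set V} {J : Finset (Sym2 V)} {a b : V} (h : s(a, b) ∈ J) (ha : a ∈ K)
    (hb : b ∉ K) : s(a, b) ∈ cutE K J := by
  simp only [cutE, Finset.mem_filter]
  exact ⟨h, a, b, rfl, ha, hb⟩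

lemma mem_cutE {K : Set V} {J : Finset (Sym2 V)} {e : Sym2 V} :
    e ∈ cutE K J ↔ e ∈ J ∧ ∃ a b, e = s(a, b) ∧ a ∈ K ∧ b ∉ K := by
  simp [cutE]

lemma inE_subset (K : Set V) (J : Finset (Sym2 V)) : inE K J ⊆ J := Finset.filter_subset _ _
lemma outE_subset (K : Set V) (J : Finset (Sym2 V)) : outE K J ⊆ J := Finset.filter_subset _ _
lemma cutE_subset (K : Set V) (J : Finset (Sym2 V)) : cutE K J ⊆ J := Finset.filter_subset _ _

/-- Sets of edges inside `K`, across the boundary of `K` and outside `K` are disjoint, so that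
sizes and boundaries add up. -/
lemma glue {K : Set V} {I Z X : Finset (Sym2 V)} (hI : inE K I = I) (hZ : cutE K Z = Z)
    (hX : outE K X = X) :
    (I ∪ Z ∪ X).card = I.card + Z.card + X.card ∧ bd (I ∪ Z ∪ X) = bd I + bd Z + bd X := by
  have h1 : Disjoint I Z := by
    rw [← hI, ← hZ, Finset.disjoint_left]
    intro e h1 h2
    obtain ⟨-, a, b, rfl, ha, hb⟩ := mem_cutE.1 h2
    exact hb (mem_inE.1 h1).2.2
  have h2 : Disjoint (I ∪ Z) X := by
    rw [← hI, ← hZ, ← hX, Finset.disjoint_left]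
    intro e h1 h2
    rcases Finset.mem_union.1 h1 with h1 | h1
    · induction e using Sym2.ind with
      | _ a b => exact (mem_outE.1 h2).2.1 (mem_inE.1 h1).2.1
    · obtain ⟨-, a, b, rfl, ha, hb⟩ := mem_cutE.1 h1
      exact (mem_outE.1 h2).2.1 ha
  exact ⟨by rw [Finset.card_union_of_disjoint h2, Finset.card_union_of_disjoint h1],
    by rw [bd_union h2, bd_union h1]⟩

lemma parts (K : Set V) (J : Finset (Sym2 V)) : inE K J ∪ cutE K J ∪ outE K J = J := by
  ext e
  induction e using Sym2.ind with
  | _ a b =>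
    simp only [Finset.mem_union]
    constructor
    · rintro ((h | h) | h)
      · exact inE_subset _ _ h
      · exact cutE_subset _ _ h
      · exact outE_subset _ _ h
    · intro h
      by_cases ha : a ∈ K <;> by_cases hb : b ∈ K
      · exact .inl (.inl (mem_inE.2 ⟨h, ha, hb⟩))
      · exact .inl (.inr (mem_cutE_of h ha hb))
      · refine .inl (.inr ?_)
        rw [Sym2.eq_swap] at h ⊢
        exact mem_cutE_of h hb ha
      · exact .inr (mem_outE.2 ⟨h, ha, hb⟩)

lemma inE_inE (K : Set V) (J : Finset (Sym2 V)) : inE K (inE K J) = inE K J := by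
  simp [inE, Finset.filter_filter]
lemma outE_outE (K : Set V) (J : Finset (Sym2 V)) : outE K (outE K J) = outE K J := by
  simp [outE, Finset.filter_filter]
lemma cutE_cutE (K : Set V) (J : Finset (Sym2 V)) : cutE K (cutE K J) = cutE K J := by
  simp [cutE, Finset.filter_filter]

lemma outE_eq_of_subset {K : Set V} {A B : Finset (Sym2 V)} (h : A ⊆ B) (hB : outE K B = B) :
    outE K A = A := by
  refine Finset.filter_true_of_mem fun e he => ?_
  have := h he
  rw [← hB] at this
  exact (Finset.mem_filter.1 this).2

lemma cutE_eq_of_subset {K : Set V} {A B : Finset (Sym2 V)} (h : A ⊆ B) (hB : cutE K B = B) :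
    cutE K A = A := by
  refine Finset.filter_true_of_mem fun e he => ?_
  have := h he
  rw [← hB] at this
  exact (Finset.mem_filter.1 this).2

lemma outE_symmDiff {K : Set V} {A B : Finset (Sym2 V)} (hA : outE K A = A) (hB : outE K B = B) :
    outE K (symmDiff A B) = symmDiff A B := by
  refine outE_eq_of_subset (B := A ∪ B) (fun x hx => ?_) ?_
  · rw [Finset.mem_symmDiff] at hx; grind
  · rw [outE, Finset.filter_union]; exact congrArg₂ _ hA hB

lemma parts_card (K : Set V) (J : Finset (Sym2 V)) :
    J.card = (inE K J).card + (cutE K J).card + (outE K J).card := by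
  have := (glue (inE_inE K J) (cutE_cutE K J) (outE_outE K J)).1
  rwa [parts] at this

lemma parts_bd (K : Set V) (J : Finset (Sym2 V)) :
    bd J = bd (inE K J) + bd (cutE K J) + bd (outE K J) := by
  have := (glue (inE_inE K J) (cutE_cutE K J) (outE_outE K J)).2
  rwa [parts] at this

lemma res_compl_bd_in {K : Set V} {J : Finset (Sym2 V)} (h : inE K J = J) :
    res Kᶜ (bd J) = 0 := by
  refine res_zero_of fun v hv => bd_zero_of fun b hb => ?_
  rw [← h] at hb
  exact hv (mem_inE.1 hb).2.1

lemma res_bd_out {K : Set V} {J : Finset (Sym2 V)} (h : outE K J = J) : res K (bd J) = 0 := by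
  refine res_zero_of fun v hv => bd_zero_of fun b hb => ?_
  rw [← h] at hb
  exact (mem_outE.1 hb).2.1 hv

lemma res_bd_in {K : Set V} {J : Finset (Sym2 V)} (h : inE K J = J) : res K (bd J) = bd J := by
  have := res_add_compl K (bd J)
  rwa [res_compl_bd_in h, add_zero] at this

lemma res_compl_bd_out {K : Set V} {J : Finset (Sym2 V)} (h : outE K J = J) :
    res Kᶜ (bd J) = bd J := by
  have := res_add_compl K (bd J)
  rwa [res_bd_out h, zero_add] at this

lemma bd_inE (K : Set V) (J : Finset (Sym2 V)) :
    bd (inE K J) = res K (bd J) + res K (bd (cutE K J)) := by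
  have h := congrArg (res K) (parts_bd K J)
  rw [res_add, res_add, res_bd_in (inE_inE K J), res_bd_out (outE_outE K J)] at h
  grind [two_chain (V := V)]

lemma bd_outE (K : Set V) (J : Finset (Sym2 V)) :
    bd (outE K J) = res Kᶜ (bd J) + res Kᶜ (bd (cutE K J)) := by
  have h := congrArg (res Kᶜ) (parts_bd K J)
  rw [res_add, res_add, res_compl_bd_in (inE_inE K J), res_compl_bd_out (outE_outE K J)] at h
  grind [two_chain (V := V)]

lemma cutE_single {K : Set V} {a b : V} (ha : a ∈ K) (hb : b ∉ K) :
    cutE K {s(a, b)} = {s(a, b)} := by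
  refine Finset.filter_true_of_mem fun e he => ?_
  rw [Finset.mem_singleton] at he
  exact ⟨a, b, he, ha, hb⟩

lemma cutE_empty (K : Set V) : cutE K ∅ = ∅ := by simp [cutE]

end

/-- The parity of an `𝔽₂`-chain on a vertex set. -/
noncomputable def tot [Fintype V] (L : Set V) (f : V → ZMod 2) : ZMod 2 := ∑ v, res L f v

lemma tot_add [Fintype V] (L : Set V) (f g : V → ZMod 2) : tot L (f + g) = tot L f + tot L g := by
  simp [tot, res_add, Finset.sum_add_distrib]

lemma tot_pt_mem [Fintype V] {L : Set V} {a : V} (h : a ∈ L) : tot L (pt a) = 1 := by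
  rw [tot, res_pt_mem h]
  simp [pt]

lemma tot_pt_notMem [Fintype V] {L : Set V} {a : V} (h : a ∉ L) : tot L (pt a) = 0 := by
  simp [tot, res_pt_notMem h]

lemma tot_zero_of [Fintype V] {L : Set V} {f : V → ZMod 2} (h : ∀ v ∈ L, f v = 0) :
    tot L f = 0 := by
  simp [tot, res_zero_of h]

lemma tot_congr [Fintype V] {L : Set V} {f g : V → ZMod 2} (h : ∀ v ∈ L, f v = g v) :
    tot L f = tot L g := by
  refine Finset.sum_congr rfl fun v _ => ?_
  by_cases hv : v ∈ L
  · simpa [res, hv] using h v hv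
  · simp [res, hv]

/-- An edge set whose boundary is odd on `L` has an edge leaving `L`. -/
lemma exists_cross [Fintype V] {L : Set V} {J : Finset (Sym2 V)} (h : tot L (bd J) ≠ 0) :
    ∃ a ∈ L, ∃ b, b ∉ L ∧ s(a, b) ∈ J := by
  by_contra! hc
  apply h
  have hsum : tot L (bd J) = ∑ e ∈ J, tot L (bdE e) :=
    map_sum (AddMonoidHom.mk' (tot L) (tot_add L)) bdE J
  rw [hsum]
  refine Finset.sum_eq_zero fun e he => ?_
  induction e using Sym2.ind with
  | _ a b =>
    rw [bdE_mk, tot_add]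
    by_cases ha : a ∈ L <;> by_cases hb : b ∈ L
    · rw [tot_pt_mem ha, tot_pt_mem hb]; rfl
    · exact absurd he (hc a ha b hb)
    · rw [Sym2.eq_swap] at he
      exact absurd he (hc b hb a ha)
    · rw [tot_pt_notMem ha, tot_pt_notMem hb, add_zero]

lemma tot_univ_bd [Fintype V] (J : Finset (Sym2 V)) : tot Set.univ (bd J) = 0 := by
  by_contra h
  obtain ⟨a, -, b, hb, -⟩ := exists_cross h
  exact hb trivial

lemma tot_compl_bd [Fintype V] (L : Set V) (J : Finset (Sym2 V)) :
    tot L (bd J) = tot Lᶜ (bd J) := by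
  have h : tot L (bd J) + tot Lᶜ (bd J) = 0 := by
    rw [← tot_univ_bd J, tot, tot, tot, ← Finset.sum_add_distrib]
    refine Finset.sum_congr rfl fun v _ => ?_
    rw [← Pi.add_apply, res_add_compl]
    simp [res]
  exact CharTwo.add_eq_zero.1 h

/-! ### Potentials and Sebő's structure theorem -/

section
open Classical

/-- A potential system on the vertex set `R`: `lam x` is the minimum size of an edge set with
boundary `t₀ + x`, for every `x ∈ R`; adjacent vertices of `R` have different values. When
`t₀ = T + r`, the number `lam x` is the distance of `x` from `r`, shifted by `ν(G, T)`, and it no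
longer refers to a particular root or minimum join. -/
structure PotSys (G : SimpleGraph V) (t₀ : V → ZMod 2) (lam : V → ℤ) (R : Set V) : Prop where
  closed : ∀ a ∈ R, ∀ b, G.Adj a b → b ∈ R
  le : ∀ x J, (∀ e ∈ J, e ∈ G.edgeSet) → bd J = t₀ + pt x → lam x ≤ (J.card : ℤ)
  attain : ∀ x ∈ R, ∃ J : Finset (Sym2 V), (∀ e ∈ J, e ∈ G.edgeSet) ∧ bd J = t₀ + pt x ∧
    (J.card : ℤ) = lam x
  ne : ∀ a ∈ R, ∀ b, G.Adj a b → lam a ≠ lam b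

/-- `F` is an optimal edge set rooted at `t`. -/
structure Opt (G : SimpleGraph V) (t₀ : V → ZMod 2) (lam : V → ℤ) (t : V)
    (F : Finset (Sym2 V)) : Prop where
  edge : ∀ e ∈ F, e ∈ G.edgeSet
  bd_eq : bd F = t₀ + pt t
  card_eq : (F.card : ℤ) = lam t

/-- `K` is a connected component of the set of vertices of potential at most `j`. Connectedness
is expressed by: a vertex set that meets `K` and is closed under adjacency in `K` contains `K`. -/
structure IsPre (G : SimpleGraph V) (lam : V → ℤ) (j : ℤ) (K : Set V) : Prop where
  le : ∀ x ∈ K, lam x ≤ j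
  closed : ∀ x ∈ K, ∀ y, G.Adj x y → lam y ≤ j → y ∈ K
  conn : ∀ P : Set V, (∃ x ∈ K, x ∈ P) →
    (∀ x ∈ K, ∀ y ∈ K, G.Adj x y → x ∈ P → y ∈ P) → K ⊆ P

/-- A component of the set of vertices of potential at most `j` in which the value `j` is
attained. -/
def IsC (G : SimpleGraph V) (lam : V → ℤ) (j : ℤ) (K : Set V) : Prop :=
  (∃ u ∈ K, lam u = j) ∧ IsPre G lam j K

/-- No optimal edge set rooted inside `K` has an edge leaving `K`. -/
def Tight (G : SimpleGraph V) (t₀ : V → ZMod 2) (lam : V → ℤ) (K : Set V) : Prop :=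
  ∀ t ∈ K, ∀ F, Opt G t₀ lam t F → cutE K F = ∅

/-- The optimal edge sets rooted inside `K` split: a part outside `K`, which may be chosen to be
`B` for all roots, and a part inside `K` depending on the root. -/
structure Split (G : SimpleGraph V) (t₀ : V → ZMod 2) (lam : V → ℤ) (K : Set V)
    (B : Finset (Sym2 V)) : Prop where
  edge : ∀ e ∈ B, e ∈ G.edgeSet
  out : outE K B = B
  bd_eq : bd B = res Kᶜ t₀
  inner : ∀ u ∈ K, ∃ I : Finset (Sym2 V), (∀ e ∈ I, e ∈ G.edgeSet) ∧ inE K I = I ∧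
    bd I = res K t₀ + pt u ∧ (I.card : ℤ) = lam u - B.card

variable {G : SimpleGraph V} {t₀ : V → ZMod 2} {lam : V → ℤ} {R : Set V}

lemma edge_union {I Z X : Finset (Sym2 V)} (hI : ∀ e ∈ I, e ∈ G.edgeSet)
    (hZ : ∀ e ∈ Z, e ∈ G.edgeSet) (hX : ∀ e ∈ X, e ∈ G.edgeSet) :
    ∀ e ∈ I ∪ Z ∪ X, e ∈ G.edgeSet := by
  intro e he
  rcases Finset.mem_union.1 he with he | he
  · rcases Finset.mem_union.1 he with he | he
    · exact hI e he
    · exact hZ e he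
  · exact hX e he

lemma edge_symmDiff {A B : Finset (Sym2 V)} (hA : ∀ e ∈ A, e ∈ G.edgeSet)
    (hB : ∀ e ∈ B, e ∈ G.edgeSet) : ∀ e ∈ symmDiff A B, e ∈ G.edgeSet := by
  intro e he
  rcases Finset.mem_symmDiff.1 he with he | he
  · exact hA e he.1
  · exact hB e he.1

lemma edge_none : ∀ e ∈ (∅ : Finset (Sym2 V)), e ∈ G.edgeSet := by simp

lemma edge_single {a b : V} (h : G.Adj a b) :
    ∀ e ∈ ({s(a, b)} : Finset (Sym2 V)), e ∈ G.edgeSet := by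
  simpa using h

namespace PotSys

lemma le_succ (S : PotSys G t₀ lam R)
    {a b : V} (ha : a ∈ R) (h : G.Adj a b) : lam b ≤ lam a + 1 := by
  obtain ⟨J, hE, hb, hc⟩ := S.attain a ha
  by_cases hm : s(a, b) ∈ J
  · have h1 := S.le b (J.erase s(a, b)) (fun e he => hE e (Finset.mem_of_mem_erase he))
      (by rw [bd_erase hm, hb]; funext w; simp only [Pi.add_apply]; grind)
    have h2 := Finset.card_erase_add_one hm
    omega
  · have h1 := S.le b (insert s(a, b) J)
      (fun e he => by
        rcases Finset.mem_insert.1 he with rfl | he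
        · exact h
        · exact hE e he)
      (by rw [bd_insert hm, hb]; funext w; simp only [Pi.add_apply]; grind)
    have h2 := Finset.card_insert_of_notMem hm
    omega

lemma step (S : PotSys G t₀ lam R)
    {a b : V} (ha : a ∈ R) (h : G.Adj a b) :
    lam b = lam a + 1 ∨ lam b = lam a - 1 := by
  have h1 := S.le_succ ha h
  have h2 := S.le_succ (S.closed a ha b h) h.symm
  have h3 := S.ne a ha b h
  omega

/-- Every edge leaving a component of level `j` goes from level `j` to level `j + 1`. -/
lemma cut_levels (S : PotSys G t₀ lam R)
    {j : ℤ} {K : Set V} (hK : IsPre G lam j K) (hR : K ⊆ R) {a b : V}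
    (ha : a ∈ K) (hb : b ∉ K) (h : G.Adj a b) : lam a = j ∧ lam b = j + 1 := by
  have h1 := hK.le a ha
  have h2 : ¬ lam b ≤ j := fun h' => hb (hK.closed a ha b h h')
  have h3 := S.step (hR ha) h
  omega

end PotSys

/-- The component of `a` is the smallest set that contains `a` and is closed under adjacency among
vertices of potential at most `j`. -/
lemma exists_component {a : V} {j : ℤ} (h : lam a ≤ j) : ∃ K, a ∈ K ∧ IsPre G lam j K := by
  let K : Set V := {x | ∀ Q : Set V, a ∈ Q →
    (∀ x ∈ Q, ∀ y, G.Adj x y → lam y ≤ j → y ∈ Q) → x ∈ Q}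
  have haK : a ∈ K := fun Q hQ _ => hQ
  have hcl : ∀ x ∈ K, ∀ y, G.Adj x y → lam y ≤ j → y ∈ K := fun x hx y hxy hy Q ha hQ =>
    hQ x (hx Q ha hQ) y hxy hy
  refine ⟨K, haK, fun x hx => hx {x | lam x ≤ j} h fun _ _ _ _ h => h, hcl, ?_⟩
  rintro P ⟨x, hxK, hxP⟩ hP
  by_cases ha : a ∈ P
  · intro z hz
    refine (hz (K ∩ P) ⟨haK, ha⟩ ?_).2
    rintro p ⟨hpK, hpP⟩ q hpq hq
    exact ⟨hcl p hpK q hpq hq, hP p hpK q (hcl p hpK q hpq hq) hpq hpP⟩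
  · refine absurd hxP (hxK (K ∩ Pᶜ) ⟨haK, ha⟩ ?_).2
    rintro p ⟨hpK, hpP⟩ q hpq hq
    exact ⟨hcl p hpK q hpq hq, fun hqP => hpP (hP q (hcl p hpK q hpq hq) p hpK hpq.symm hqP)⟩

lemma IsPre.laminar {j j' : ℤ} {K L : Set V} (hK : IsPre G lam j K) (hL : IsPre G lam j' L)
    (hj : j ≤ j') {x : V} (hx : x ∈ K) (hx' : x ∈ L) : K ⊆ L :=
  hK.conn L ⟨x, hx, hx'⟩ fun p _ q hq hpq hpL => hL.closed p hpL q hpq ((hK.le q hq).trans hj)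

/-- A vertex of `K` below the top level lies in a component one level down, contained in `K`. -/
lemma PotSys.child (S : PotSys G t₀ lam R) {j : ℤ} {K : Set V} (hK : IsC G lam j K) (hR : K ⊆ R)
    {t : V} (ht : t ∈ K) (htj : lam t < j) :
    ∃ L, IsC G lam (j - 1) L ∧ t ∈ L ∧ L ⊆ K ∧ L ≠ K := by
  obtain ⟨L, htL, hL⟩ := exists_component (G := G) (lam := lam) (a := t) (j := j - 1) (by omega)
  have hLK : L ⊆ K := hL.laminar hK.2 (by omega) htL ht
  obtain ⟨u, huK, huj⟩ := hK.1
  have huL : u ∉ L := fun h => by have := hL.le u h; omega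
  have hex : ∃ x ∈ K, ∃ y ∈ K, G.Adj x y ∧ x ∈ L ∧ y ∉ L := by
    by_contra! hc
    exact huL (hK.2.conn L ⟨t, ht, htL⟩ hc huK)
  obtain ⟨x, -, y, -, hxy, hxL, hyL⟩ := hex
  refine ⟨L, ⟨⟨x, hxL, (S.cut_levels hL (hLK.trans hR) hxL hyL hxy).1⟩, hL⟩, htL, hLK, ?_⟩
  rintro rfl
  exact huL huK

lemma bd_in_of_cut_empty {K : Set V} {F : Finset (Sym2 V)} (h : cutE K F = ∅) :
    bd (inE K F) = res K (bd F) ∧ bd (outE K F) = res Kᶜ (bd F) := by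
  constructor
  · rw [bd_inE, h, bd_empty]; simp [res]
  · rw [bd_outE, h, bd_empty]; simp [res]

/-- An optimal edge set rooted in a tight set is the union of its inner and outer parts. -/
lemma Opt.parts {K : Set V} (hC : Tight G t₀ lam K) {t : V} (ht : t ∈ K) {F : Finset (Sym2 V)}
    (hF : Opt G t₀ lam t F) :
    bd (inE K F) = res K t₀ + pt t ∧ bd (outE K F) = res Kᶜ t₀ ∧
      ((inE K F).card : ℤ) + (outE K F).card = lam t := by
  have h0 := hC t ht F hF
  obtain ⟨h1, h2⟩ := bd_in_of_cut_empty h0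
  rw [hF.bd_eq, res_add] at h1 h2
  refine ⟨by rw [h1, res_pt_mem ht], by rw [h2, res_compl_pt_mem ht, add_zero], ?_⟩
  have := parts_card K F
  rw [h0, Finset.card_empty] at this
  rw [← hF.card_eq]
  omega

/-- The outer parts of optimal edge sets rooted in a tight set are interchangeable: all have the
same boundary and, by minimality, the same size. -/
lemma PotSys.exists_split (S : PotSys G t₀ lam R) {K : Set V} (hR : K ⊆ R) (hne : K.Nonempty)
    (hC : Tight G t₀ lam K) : ∃ B, Split G t₀ lam K B := by
  have hopt : ∀ u ∈ K, ∃ F, Opt G t₀ lam u F := fun u hu => by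
    obtain ⟨J, h1, h2, h3⟩ := S.attain u (hR hu)
    exact ⟨J, h1, h2, h3⟩
  -- the inner part of one optimal set and the outer part of another one combine
  have key : ∀ u ∈ K, ∀ w ∈ K, ∀ F F', Opt G t₀ lam u F → Opt G t₀ lam w F' →
      (outE K F).card ≤ (outE K F').card := by
    intro u hu w hw F F' hF hF'
    obtain ⟨a1, a2, a3⟩ := hF.parts hC hu
    obtain ⟨b1, b2, b3⟩ := hF'.parts hC hw
    obtain ⟨g1, g2⟩ := glue (inE_inE K F) (cutE_empty K) (outE_outE K F')
    have := S.le u _ (edge_union (fun e he => hF.edge e (inE_subset _ _ he)) edge_none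
      (fun e he => hF'.edge e (outE_subset _ _ he)))
      (by
        rw [g2, a1, b2, bd_empty]
        funext w
        have := congrFun (res_add_compl K t₀) w
        simp only [Pi.add_apply, Pi.zero_apply] at this ⊢
        grind)
    rw [g1, Finset.card_empty] at this
    push_cast at this
    omega
  obtain ⟨u₀, hu₀⟩ := hne
  obtain ⟨F₀, hF₀⟩ := hopt u₀ hu₀
  refine ⟨outE K F₀, fun e he => hF₀.edge e (outE_subset _ _ he), outE_outE _ _,
    (hF₀.parts hC hu₀).2.1, fun u hu => ?_⟩
  obtain ⟨F, hF⟩ := hopt u hu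
  obtain ⟨a1, a2, a3⟩ := hF.parts hC hu
  have h1 := key u hu u₀ hu₀ F F₀ hF hF₀
  have h2 := key u₀ hu₀ u hu F₀ F hF₀ hF
  exact ⟨inE K F, fun e he => hF.edge e (inE_subset _ _ he), inE_inE _ _, a1, by omega⟩

section split
variable {K : Set V} {B : Finset (Sym2 V)}

lemma Split.le_out (S : PotSys G t₀ lam R) (hB : Split G t₀ lam K B)
    (hne : K.Nonempty) {X : Finset (Sym2 V)} (hX : ∀ e ∈ X, e ∈ G.edgeSet)
    (hXo : outE K X = X) (hbd : bd X = res Kᶜ t₀) : B.card ≤ X.card := by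
  obtain ⟨u, hu⟩ := hne
  obtain ⟨I, i1, i2, i3, i4⟩ := hB.inner u hu
  obtain ⟨g1, g2⟩ := glue i2 (cutE_empty K) hXo
  have := S.le u _ (edge_union i1 edge_none hX) (by
    rw [g2, i3, hbd, bd_empty]
    funext w
    have := congrFun (res_add_compl K t₀) w
    simp only [Pi.add_apply, Pi.zero_apply] at this ⊢
    grind)
  rw [g1, Finset.card_empty] at this
  push_cast at this
  omega

lemma Split.le_in (S : PotSys G t₀ lam R) (hB : Split G t₀ lam K B)
    {u : V} {Y : Finset (Sym2 V)} (hY : ∀ e ∈ Y, e ∈ G.edgeSet)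
    (hYi : inE K Y = Y) (hbd : bd Y = res K t₀ + pt u) : lam u - B.card ≤ Y.card := by
  obtain ⟨g1, g2⟩ := glue hYi (cutE_empty K) hB.out
  have := S.le u _ (edge_union hY edge_none hB.edge) (by
    rw [g2, hbd, hB.bd_eq, bd_empty]
    funext w
    have := congrFun (res_add_compl K t₀) w
    simp only [Pi.add_apply, Pi.zero_apply] at this ⊢
    grind)
  rw [g1, Finset.card_empty] at this
  push_cast at this
  omega

/-- An edge set outside `K` whose boundary is that of `B` plus `z` plus `p`, with `z` a neighbour
of `K`, is completed through `K` to an edge set rooted at `p`. -/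
lemma Split.le_through (S : PotSys G t₀ lam R) (hB : Split G t₀ lam K B)
    {l z p : V} (hl : l ∈ K) (hz : z ∉ K) (hlz : G.Adj l z)
    {X : Finset (Sym2 V)} (hX : ∀ e ∈ X, e ∈ G.edgeSet) (hXo : outE K X = X)
    (hbd : bd X = res Kᶜ t₀ + pt z + pt p) : lam p ≤ X.card + 1 + (lam l - B.card) := by
  obtain ⟨I, i1, i2, i3, i4⟩ := hB.inner l hl
  obtain ⟨g1, g2⟩ := glue i2 (cutE_single hl hz) hXo
  have := S.le p _ (edge_union i1 (edge_single hlz) hX) (by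
    rw [g2, i3, hbd, bd_single]
    funext w
    have := congrFun (res_add_compl K t₀) w
    simp only [Pi.add_apply, Pi.zero_apply] at this ⊢
    grind)
  rw [g1, Finset.card_singleton] at this
  push_cast at this
  omega

/-- Replacing the inner part of an optimal edge set moves its root inside `K`. -/
lemma Split.move (S : PotSys G t₀ lam R) (hB : Split G t₀ lam K B)
    (hC : Tight G t₀ lam K) {t l : V} (ht : t ∈ K) (hl : l ∈ K)
    {F : Finset (Sym2 V)} (hF : Opt G t₀ lam t F) :
    ∃ F', Opt G t₀ lam l F' ∧ outE K F ⊆ F' := by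
  obtain ⟨a1, a2, a3⟩ := hF.parts hC ht
  obtain ⟨I, i1, i2, i3, i4⟩ := hB.inner l hl
  obtain ⟨g1, g2⟩ := glue i2 (cutE_empty K) (outE_outE K F)
  have hle := hB.le_in S (fun e he => hF.edge e (inE_subset _ _ he)) (inE_inE K F) a1
  have hE := edge_union i1 edge_none (fun e he => hF.edge e (outE_subset K F he))
  have hbd : bd (I ∪ ∅ ∪ outE K F) = t₀ + pt l := by
    rw [g2, i3, a2, bd_empty]
    funext w
    have := congrFun (res_add_compl K t₀) w
    simp only [Pi.add_apply, Pi.zero_apply] at this ⊢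
    grind
  have hle' := S.le l _ hE hbd
  refine ⟨I ∪ ∅ ∪ outE K F, ⟨hE, hbd, ?_⟩, Finset.subset_union_right⟩
  rw [g1, Finset.card_empty] at hle' ⊢
  push_cast at hle' ⊢
  omega

end split

/-- An optimal edge set rooted in a tight set is extended by an edge leaving that set. -/
lemma Opt.extend {K : Set V} (hC : Tight G t₀ lam K) {y x : V} (hy : y ∈ K) (hx : x ∉ K)
    (hxy : G.Adj y x) (hlam : lam x = lam y + 1) {F : Finset (Sym2 V)}
    (hF : Opt G t₀ lam y F) : Opt G t₀ lam x (insert s(y, x) F) := by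
  have hnot : s(y, x) ∉ F := fun h => by
    have := mem_cutE_of h hy hx
    rw [hC y hy F hF] at this
    simp at this
  refine ⟨fun e he => ?_, ?_, ?_⟩
  · rcases Finset.mem_insert.1 he with rfl | he
    · exact hxy
    · exact hF.edge e he
  · rw [bd_insert hnot, hF.bd_eq]; funext w; simp only [Pi.add_apply]; grind
  · rw [Finset.card_insert_of_notMem hnot, hlam, ← hF.card_eq]; push_cast; rfl

/-- Sebő: an optimal edge set rooted outside a tight component has exactly one edge leaving it. -/
lemma PotSys.unique_cut (S : PotSys G t₀ lam R) {j : ℤ} {K : Set V} (hK : IsC G lam j K)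
    (hR : K ⊆ R) (hC : Tight G t₀ lam K) {t : V} (ht : t ∉ K) {F : Finset (Sym2 V)}
    (hF : Opt G t₀ lam t F) :
    ∃ u ∈ K, ∃ v, v ∉ K ∧ G.Adj u v ∧ s(u, v) ∈ F ∧ cutE K F = {s(u, v)} := by
  obtain ⟨B, hB⟩ := S.exists_split hR (hK.1.imp fun _ h => h.1) hC
  set V' := res Kᶜ (bd (cutE K F)) with hV'
  have hOut := bd_outE K F
  have hIn := bd_inE K F
  rw [hF.bd_eq, res_add, ← hV', res_compl_pt_notMem ht] at hOut
  rw [hF.bd_eq, res_add, res_pt_notMem ht, add_zero] at hIn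
  have hEo : ∀ e ∈ outE K F, e ∈ G.edgeSet := fun e he => hF.edge e (outE_subset _ _ he)
  obtain ⟨J₁, hJ₁, v, hv, hbd₁⟩ := exists_connection (symmDiff (outE K F) B) t V' (by
    rw [bd_symmDiff, hOut, hB.bd_eq]; funext w; simp only [Pi.add_apply]; grind)
  have hvK : v ∉ K := fun h => hv (by simp [hV', res, h])
  have hv' : bd (cutE K F) v ≠ 0 := by simpa [hV', res, hvK] using hv
  obtain ⟨u, huv⟩ := bd_ne_zero hv'
  rw [Sym2.eq_swap] at huv
  have huK : u ∈ K := by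
    obtain ⟨-, a, b, hab, ha, hb⟩ := mem_cutE.1 huv
    rw [Sym2.eq_iff] at hab
    rcases hab with ⟨rfl, rfl⟩ | ⟨rfl, rfl⟩
    · exact ha
    · exact absurd ha hvK
  have huvF : s(u, v) ∈ F := cutE_subset _ _ huv
  have hadj : G.Adj u v := hF.edge _ huvF
  refine ⟨u, huK, v, hvK, hadj, huvF, ?_⟩
  have hlu := (S.cut_levels hK.2 hR huK hvK hadj).1
  have hD : outE K (symmDiff (outE K F) B) = symmDiff (outE K F) B :=
    outE_symmDiff (outE_outE K F) hB.out
  have hED := edge_symmDiff hEo hB.edge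
  set J₂ := symmDiff (outE K F) B \ J₁ with hJ₂
  have hcard := card_toggle hJ₁
  rw [← hJ₂] at hcard
  have hbd₂ : bd J₂ = V' + pt v := by
    rw [hJ₂, bd_sdiff hJ₁, hbd₁, bd_symmDiff, hOut, hB.bd_eq]; funext w; simp only [Pi.add_apply]; grind
  -- one part of `F` yields an edge set rooted at `t`, the other one an edge set rooted at `u`
  have h1 := hB.le_through S huK hvK hadj (p := t) (X := symmDiff B J₁)
    (edge_symmDiff hB.edge fun e he => hED e (hJ₁ he))
    (outE_symmDiff hB.out (outE_eq_of_subset hJ₁ hD))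
    (by rw [bd_symmDiff, hB.bd_eq, hbd₁]; ring)
  have hZ : cutE K ((cutE K F).erase s(u, v)) = (cutE K F).erase s(u, v) :=
    cutE_eq_of_subset (Finset.erase_subset _ _) (cutE_cutE K F)
  have hEF : ∀ e ∈ inE K F ∪ (cutE K F).erase s(u, v) ∪ symmDiff B J₂, e ∈ G.edgeSet :=
    edge_union (fun e he => hF.edge e (inE_subset _ _ he))
      (fun e he => hF.edge e (cutE_subset _ _ (Finset.mem_of_mem_erase he)))
      (edge_symmDiff hB.edge fun e he => hED e (Finset.sdiff_subset he))
  obtain ⟨g1, g2⟩ := glue (inE_inE K F) hZ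
    (outE_symmDiff hB.out (outE_eq_of_subset (A := J₂) Finset.sdiff_subset hD))
  have hbdu : bd (inE K F ∪ (cutE K F).erase s(u, v) ∪ symmDiff B J₂) = t₀ + pt u := by
    rw [g2, bd_erase huv, bd_symmDiff, hbd₂, hIn, hB.bd_eq]
    funext w
    have e1 := congrFun (res_add_compl K t₀) w
    have e2 := congrFun (res_add_compl K (bd (cutE K F))) w
    simp only [Pi.add_apply] at e1 e2 ⊢
    rw [hV']
    grind
  have h2 := S.le u _ hEF hbdu
  have hF' := parts_card K F
  have hFc := hF.card_eq
  have he := Finset.card_erase_add_one huv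
  have hopt : Opt G t₀ lam u (inE K F ∪ (cutE K F).erase s(u, v) ∪ symmDiff B J₂) := by
    refine ⟨hEF, hbdu, ?_⟩
    rw [g1] at h2 ⊢
    push_cast at h2 ⊢
    omega
  have hemp := hC u huK _ hopt
  have hnone : (cutE K F).erase s(u, v) = ∅ := by
    rw [Finset.eq_empty_iff_forall_notMem]
    intro e hme
    have : e ∈ cutE K (inE K F ∪ (cutE K F).erase s(u, v) ∪ symmDiff B J₂) := by
      rw [← hZ] at hme
      obtain ⟨h, h'⟩ := mem_cutE.1 hme
      exact mem_cutE.2 ⟨Finset.mem_union_left _ (Finset.mem_union_right _ h), h'⟩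
    rw [hemp] at this
    simp at this
  rw [← Finset.insert_erase huv, hnone]
  rfl

/-- If no optimal edge set rooted in the component `L` uses the edge `uv`, neither does one rooted
at a neighbour `y` of `L`. -/
lemma PotSys.avoid_neighbor (S : PotSys G t₀ lam R) {j : ℤ} {L : Set V}
    (hL : IsC G lam (j - 1) L) (hR : L ⊆ R) (hC : Tight G t₀ lam L) {u v : V} (huL : u ∉ L)
    (hvL : v ∉ L) (hu : lam u = j) (hv : lam v = j + 1) (huv : G.Adj u v)
    (hgood : ∀ t ∈ L, ∀ F, Opt G t₀ lam t F → s(u, v) ∉ F) {l y : V} (hl : l ∈ L) (hy : y ∉ L)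
    (hly : G.Adj l y) {F : Finset (Sym2 V)} (hF : Opt G t₀ lam y F) : s(u, v) ∉ F := by
  intro hmem
  have hne : L.Nonempty := ⟨l, hl⟩
  obtain ⟨B, hB⟩ := S.exists_split hR hne hC
  obtain ⟨l', hl', a, ha, hla, hlaF, hcut⟩ := S.unique_cut hL hR hC hy hF
  obtain ⟨hll, hly'⟩ := S.cut_levels hL.2 hR hl hy hly
  obtain ⟨hll', hla'⟩ := S.cut_levels hL.2 hR hl' ha hla
  have hIn := bd_inE L F
  have hOut := bd_outE L F
  rw [hF.bd_eq, hcut, bd_single, res_add, res_add, res_pt_notMem hy, res_pt_mem hl',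
    res_pt_notMem ha, add_zero, add_zero] at hIn
  rw [hF.bd_eq, hcut, bd_single, res_add, res_add, res_compl_pt_notMem hy,
    res_compl_pt_mem hl', res_compl_pt_notMem ha, zero_add] at hOut
  have hEo : ∀ e ∈ outE L F, e ∈ G.edgeSet := fun e he => hF.edge e (outE_subset _ _ he)
  have hin := hB.le_in S (fun e he => hF.edge e (inE_subset _ _ he)) (inE_inE L F) hIn
  have hFc := hF.card_eq
  have hFp := parts_card L F
  rw [hcut, Finset.card_singleton] at hFp
  have huvO : s(u, v) ∈ outE L F := mem_outE.2 ⟨hmem, huL, hvL⟩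
  -- an outer part of minimum size never contains `uv`
  have hnot : ∀ X : Finset (Sym2 V), (∀ e ∈ X, e ∈ G.edgeSet) → outE L X = X →
      bd X = res Lᶜ t₀ → X.card = B.card → s(u, v) ∉ X := by
    intro X hX hXo hbd hc hm
    obtain ⟨I, i1, i2, i3, i4⟩ := hB.inner l hl
    obtain ⟨g1, g2⟩ := glue i2 (cutE_empty L) hXo
    refine hgood l hl (I ∪ ∅ ∪ X) ⟨edge_union i1 edge_none hX, ?_, ?_⟩
      (Finset.mem_union_right _ hm)
    · rw [g2, i3, hbd, bd_empty]
      funext w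
      have := congrFun (res_add_compl L t₀) w
      simp only [Pi.add_apply, Pi.zero_apply] at this ⊢
      grind
    · rw [g1, Finset.card_empty]; push_cast; omega
  have hBuv := hnot B hB.edge hB.out hB.bd_eq rfl
  set J := symmDiff (outE L F) B with hJ
  have hD : outE L J = J := outE_symmDiff (outE_outE L F) hB.out
  have hED : ∀ e ∈ J, e ∈ G.edgeSet := edge_symmDiff hEo hB.edge
  have huvJ : s(u, v) ∈ J := Finset.mem_symmDiff.2 (.inl ⟨huvO, hBuv⟩)
  have hbdJ : bd J = pt y + pt a := by
    rw [hJ, bd_symmDiff, hOut, hB.bd_eq]; funext w; simp only [Pi.add_apply]; grind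
  obtain ⟨J₁, hJ₁, s', hs', hbd₁⟩ := exists_connection (J.erase s(u, v)) v (pt y + pt a + pt u)
    (by rw [bd_erase huvJ, hbdJ]; ring)
  have hJ₁J : J₁ ⊆ J := hJ₁.trans (Finset.erase_subset _ _)
  have huv₁ : s(u, v) ∉ J₁ := fun h => by simpa using hJ₁ h
  have hE₁ : ∀ X ⊆ J, ∀ e ∈ symmDiff B X, e ∈ G.edgeSet := fun X hX =>
    edge_symmDiff hB.edge fun e he => hED e (hX he)
  have hO₁ : ∀ X ⊆ J, outE L (symmDiff B X) = symmDiff B X := fun X hX =>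
    outE_symmDiff hB.out (outE_eq_of_subset hX hD)
  -- the exchange is split along `J₁` together with `uv`, a connection from `u` to `s'`, and the
  -- rest; each end `s'` gives two edge sets, too small for the levels of `u`, `v`, `y` and `a`
  have hsub : insert s(u, v) J₁ ⊆ J := Finset.insert_subset huvJ hJ₁J
  have hcard := card_toggle hsub
  rw [← hJ] at hcard
  have hbdi := bd_insert huv₁
  have hbd₂ : bd (J \ insert s(u, v) J₁) = pt y + pt a + pt u + pt s' := by
    rw [bd_sdiff hsub, hbdi, hbd₁, hbdJ]; funext w; simp only [Pi.add_apply]; grind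
  -- toggling `uv` costs one, since `uv` is not in `B`
  have hins : (symmDiff B (insert s(u, v) J₁)).card = (symmDiff B J₁).card + 1 := by
    have : symmDiff B (insert s(u, v) J₁) = insert s(u, v) (symmDiff B J₁) := by
      ext x
      simp only [Finset.mem_symmDiff, Finset.mem_insert]
      by_cases hx : x = s(u, v)
      · subst hx; tauto
      · tauto
    rw [this, Finset.card_insert_of_notMem]
    simp [Finset.mem_symmDiff, hBuv, huv₁]
  have hrest := Finset.sdiff_subset (s := J) (t := insert s(u, v) J₁)
  by_cases h1 : s' = u
  · subst h1
    have hbdC : bd (symmDiff B (insert s(s', v) J₁)) = res Lᶜ t₀ := by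
      rw [bd_symmDiff, hbdi, hbd₁, hB.bd_eq]; funext w; simp only [Pi.add_apply]; grind
    have c1 := hB.le_out S hne (hE₁ _ hsub) (hO₁ _ hsub) hbdC
    have c2 : (symmDiff B (insert s(s', v) J₁)).card ≠ B.card := fun h =>
      hnot _ (hE₁ _ hsub) (hO₁ _ hsub) hbdC h
        (Finset.mem_symmDiff.2 (.inr ⟨Finset.mem_insert_self _ _, hBuv⟩))
    have c3 := hB.le_through S hl hy hly (p := a) (hE₁ _ hrest) (hO₁ _ hrest)
      (by rw [bd_symmDiff, hB.bd_eq, hbd₂]; funext w; simp only [Pi.add_apply]; grind)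
    omega
  by_cases h2 : s' = y
  · subst h2
    have c1 := hB.le_through S hl hy hly (p := v) (hE₁ _ hJ₁J) (hO₁ _ hJ₁J)
      (by rw [bd_symmDiff, hB.bd_eq, hbd₁]; ring)
    have c2 := hB.le_through S hl' ha hla (p := u) (hE₁ _ hrest) (hO₁ _ hrest)
      (by rw [bd_symmDiff, hB.bd_eq, hbd₂]; funext w; simp only [Pi.add_apply]; grind)
    omega
  by_cases h3 : s' = a
  · subst h3
    have c1 := hB.le_through S hl' ha hla (p := v) (hE₁ _ hJ₁J) (hO₁ _ hJ₁J)
      (by rw [bd_symmDiff, hB.bd_eq, hbd₁]; ring)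
    have c2 := hB.le_through S hl hy hly (p := u) (hE₁ _ hrest) (hO₁ _ hrest)
      (by rw [bd_symmDiff, hB.bd_eq, hbd₂]; funext w; simp only [Pi.add_apply]; grind)
    omega
  · apply hs'
    simp [pt_ne (Ne.symm h1), pt_ne (Ne.symm h2), pt_ne (Ne.symm h3)]

/-- Sebő: every component is tight. For an edge `uv` leaving `K` at `u`, the roots whose optimal
edge sets avoid `uv` contain `u`, and they propagate along the edges of `K`, using tightness of
the components one level down. -/
theorem PotSys.tight [Finite V] (S : PotSys G t₀ lam R) {j : ℤ} {K : Set V} (hK : IsC G lam j K)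
    (hR : K ⊆ R) : Tight G t₀ lam K := by
  induction hn : K.ncard using Nat.strong_induction_on generalizing K j with
  | _ n ih =>
    subst hn
    have hsmall : ∀ t ∈ K, lam t < j → ∃ L, IsC G lam (j - 1) L ∧ t ∈ L ∧ L ⊆ K ∧ L ⊆ R ∧
        Tight G t₀ lam L := by
      intro t ht htj
      obtain ⟨L, hL, htL, hLK, hne⟩ := S.child hK hR ht htj
      exact ⟨L, hL, htL, hLK, hLK.trans hR,
        ih _ (Set.ncard_lt_ncard (hLK.ssubset_of_ne hne)) hL (hLK.trans hR) rfl⟩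
    intro t ht F hF
    rw [Finset.eq_empty_iff_forall_notMem]
    intro e he
    obtain ⟨heF, u, v, rfl, huK, hvK⟩ := mem_cutE.1 he
    have huv : G.Adj u v := hF.edge _ heF
    obtain ⟨hu, hv⟩ := S.cut_levels hK.2 hR huK hvK huv
    suffices hall : K ⊆ {x | ∀ F, Opt G t₀ lam x F → s(u, v) ∉ F} from hall ht F hF heF
    refine hK.2.conn _ ⟨u, huK, ?_⟩ ?_
    · intro F hF hm
      have := S.le v (F.erase s(u, v)) (fun e he => hF.edge e (Finset.mem_of_mem_erase he))
        (by rw [bd_erase hm, hF.bd_eq]; funext w; simp only [Pi.add_apply]; grind)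
      have h2 := Finset.card_erase_add_one hm
      have := hF.card_eq
      omega
    · intro x hx y hy hxy hgood F hF hm
      have hxj := hK.2.le x hx
      have hyj := hK.2.le y hy
      have hst := S.step (hR hx) hxy
      by_cases hlt : lam x < j
      · obtain ⟨L, hL, hxL, hLK, hLR, hLC⟩ := hsmall x hx hlt
        have huL : u ∉ L := fun h => by have := hL.2.le u h; omega
        have hvL : v ∉ L := fun h => hvK (hLK h)
        obtain ⟨B, hB⟩ := S.exists_split hLR ⟨x, hxL⟩ hLC
        have hall : ∀ t ∈ L, ∀ F, Opt G t₀ lam t F → s(u, v) ∉ F := by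
          intro t ht F hF hm
          obtain ⟨F', hF', hsub⟩ := hB.move S hLC ht hxL hF
          exact hgood F' hF' (hsub (mem_outE.2 ⟨hm, huL, hvL⟩))
        by_cases hyL : y ∈ L
        · exact hall y hyL F hF hm
        · exact S.avoid_neighbor hL hLR hLC huL hvL hu hv huv hall hxL hyL hxy hF hm
      · obtain ⟨L, hL, hyL, hLK, hLR, hLC⟩ := hsmall y hy (by omega)
        have hxL : x ∉ L := fun h => by have := hL.2.le x h; omega
        exact hgood _ (hF.extend hLC hyL hxL hxy.symm (by omega)) (Finset.mem_insert_of_mem hm)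

end

/-! ### Minimality of inner and outer parts -/

section
open Classical

variable {G : SimpleGraph V} {t₀ : V → ZMod 2} {lam : V → ℤ} {R : Set V}

lemma inE_mono {K L : Set V} (h : K ⊆ L) {I : Finset (Sym2 V)} (hI : inE K I = I) :
    inE L I = I := by
  refine Finset.filter_true_of_mem fun e he => ?_
  rw [← hI] at he
  exact fun v hv => h ((Finset.mem_filter.1 he).2 v hv)

lemma outE_outE_subset (K L : Set V) (J : Finset (Sym2 V)) : outE L (outE K J) ⊆ outE L J :=
  Finset.filter_subset_filter _ (outE_subset _ _)

/-- The boundary `t₀` is odd on every component, since an optimal edge set rooted there has no edge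
leaving it. -/
lemma PotSys.tot_eq_one [Fintype V] (S : PotSys G t₀ lam R) {j : ℤ} {L : Set V}
    (hL : IsC G lam j L) (hR : L ⊆ R) : tot L t₀ = 1 := by
  obtain ⟨u, hu, -⟩ := hL.1
  obtain ⟨J, h1, h2, h3⟩ := S.attain u (hR hu)
  have hcut := S.tight hL hR u hu J ⟨h1, h2, h3⟩
  have h0 : tot L (bd J) = 0 := by
    by_contra h
    obtain ⟨a, ha, b, hb, hab⟩ := exists_cross h
    have := mem_cutE_of hab ha hb
    rw [hcut] at this
    simp at this
  rw [h2, tot_add, tot_pt_mem hu] at h0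
  exact (CharTwo.add_eq_zero (R := ZMod 2)).1 h0

/-- Comparison of sizes. An edge of a part `I` of an optimal edge set `F` leaves the component of
its lower end at the level of that end, and no other edge of `F` leaves this component. An edge of
`X` leaves at most one component from level `j` to level `j + 1` over all `j`. Hence `I` is at most
as large as any `X` with an edge leaving each component that an edge of `I` leaves. -/
lemma PotSys.count [Fintype V] (S : PotSys G t₀ lam R) {t : V} {F I X : Finset (Sym2 V)}
    (hF : Opt G t₀ lam t F) (hIF : I ⊆ F) (hIR : inE R I = I) (hX : ∀ e ∈ X, e ∈ G.edgeSet)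
    (h : ∀ L j, IsC G lam j L → L ⊆ R → t ∉ L → ∀ a ∈ L, ∀ b, b ∉ L → s(a, b) ∈ I →
      ∃ a' ∈ L, ∃ b', b' ∉ L ∧ s(a', b') ∈ X) : I.card ≤ X.card := by
  refine Finset.card_le_card_of_forall_subsingleton
    (fun e f => ∃ L j, IsC G lam j L ∧ L ⊆ R ∧ t ∉ L ∧ e ∈ cutE L I ∧ f ∈ cutE L X) ?_ ?_
  · intro e he
    obtain ⟨a, b, rfl, haR, hab⟩ : ∃ a b, e = s(a, b) ∧ a ∈ R ∧ lam b = lam a + 1 := by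
      induction e using Sym2.ind with
      | _ a b =>
        rw [← hIR] at he
        obtain ⟨he, ha, hb⟩ := mem_inE.1 he
        have hadj : G.Adj a b := hF.edge _ (hIF he)
        rcases S.step ha hadj with h | h
        · exact ⟨a, b, rfl, ha, h⟩
        · exact ⟨b, a, Sym2.eq_swap, hb, by omega⟩
    obtain ⟨L, haL, hL⟩ := exists_component (G := G) (le_refl (lam a))
    have hLR : L ⊆ R := hL.conn R ⟨a, haL, haR⟩ fun x _ y _ hxy hx => S.closed x hx y hxy
    have hC : IsC G lam (lam a) L := ⟨⟨a, haL, rfl⟩, hL⟩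
    have hbL : b ∉ L := fun h => by have := hL.le b h; omega
    have htL : t ∉ L := fun h => by
      have h1 := mem_cutE_of (hIF he) haL hbL
      rw [S.tight hC hLR t h F hF] at h1
      simp at h1
    obtain ⟨a', ha', b', hb', hab'⟩ := h L _ hC hLR htL a haL b hbL he
    exact ⟨_, hab', L, _, hC, hLR, htL, mem_cutE_of he haL hbL, mem_cutE_of hab' ha' hb'⟩
  · rintro f hf e₁ ⟨-, L₁, j₁, hL₁, hR₁, ht₁, he₁, hf₁⟩ e₂ ⟨-, L₂, j₂, hL₂, hR₂, ht₂, he₂, hf₂⟩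
    obtain ⟨-, a₁, b₁, rfl, ha₁, hb₁⟩ := mem_cutE.1 hf₁
    obtain ⟨-, a₂, b₂, hab, ha₂, hb₂⟩ := mem_cutE.1 hf₂
    have hadj : G.Adj a₁ b₁ := hX _ hf
    have hadj' : G.Adj a₂ b₂ := by
      have := hX _ hf
      rwa [hab] at this
    have l₁ := S.cut_levels hL₁.2 hR₁ ha₁ hb₁ hadj
    have l₂ := S.cut_levels hL₂.2 hR₂ ha₂ hb₂ hadj'
    rw [Sym2.eq_iff] at hab
    obtain ⟨rfl, rfl⟩ : a₁ = a₂ ∧ b₁ = b₂ := by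
      rcases hab with h | ⟨rfl, rfl⟩
      · exact h
      · omega
    obtain rfl : L₁ = L₂ :=
      Set.Subset.antisymm (hL₁.2.laminar hL₂.2 (by omega) ha₁ ha₂)
        (hL₂.2.laminar hL₁.2 (by omega) ha₂ ha₁)
    obtain ⟨u, -, v, -, -, -, hc⟩ := S.unique_cut hL₁ hR₁ (S.tight hL₁ hR₁) ht₁ hF
    have key : ∀ e ∈ cutE L₁ I, e = s(u, v) := fun e he => by
      obtain ⟨h1, h2⟩ := mem_cutE.1 he
      have : e ∈ cutE L₁ F := mem_cutE.2 ⟨hIF h1, h2⟩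
      rw [hc] at this
      simpa using this
    rw [key _ he₁, key _ he₂]

/-- The inner part of an optimal edge set rooted in `A(K)` is minimum even if the boundary may be
changed arbitrarily on `A(K)`. -/
lemma PotSys.in_bound [Fintype V] (S : PotSys G t₀ lam R) {i : ℤ} {K : Set V}
    (hK : IsC G lam i K) (hR : K ⊆ R) {B : Finset (Sym2 V)} (hB : Split G t₀ lam K B)
    {X : Finset (Sym2 V)} (hX : ∀ e ∈ X, e ∈ G.edgeSet) {U : V → ZMod 2}
    (hbd : bd X = res K t₀ + U) (hU : ∀ x, U x ≠ 0 → x ∈ K ∧ lam x = i) :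
    i - B.card ≤ X.card := by
  obtain ⟨u₀, hu₀, hlu⟩ := hK.1
  obtain ⟨I, i1, i2, i3, i4⟩ := hB.inner u₀ hu₀
  obtain ⟨g1, g2⟩ := glue i2 (cutE_empty K) hB.out
  have hF : Opt G t₀ lam u₀ (I ∪ ∅ ∪ B) := by
    refine ⟨edge_union i1 edge_none hB.edge, ?_, ?_⟩
    · rw [g2, i3, hB.bd_eq, bd_empty]
      funext w
      have := congrFun (res_add_compl K t₀) w
      simp only [Pi.add_apply, Pi.zero_apply] at this ⊢
      grind
    · rw [g1, Finset.card_empty]; push_cast; omega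
  have hIK : ∀ {a b}, s(a, b) ∈ I → a ∈ K ∧ b ∈ K := fun {a b} h => by
    rw [← i2] at h
    exact (mem_inE.1 h).2
  have hIR : inE R I = I := inE_mono hR i2
  have hle := S.count hF (I := I) (X := X) (by intro e he; simp [he]) hIR hX (by
    intro L j hL hLR htL a ha b hb hab
    obtain ⟨haK, hbK⟩ := hIK hab
    have hlev := S.cut_levels hL.2 hLR ha hb (i1 _ hab)
    have hbi := hK.2.le b hbK
    have hLK : L ⊆ K := hL.2.laminar hK.2 (by omega) ha haK
    apply exists_cross
    have h1 : tot L (bd X) = tot L t₀ := by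
      refine tot_congr fun v hv => ?_
      have h0 : U v = 0 := by
        by_contra h
        have := (hU v h).2
        have := hL.2.le v hv
        omega
      rw [hbd, Pi.add_apply, h0, add_zero]
      simp [res, hLK hv]
    rw [h1, S.tot_eq_one hL hLR]
    exact one_ne_zero)
  omega

/-- The outer part of an optimal edge set is minimum even if the boundary may
be changed arbitrarily on the outer neighbours of `K`. -/
lemma PotSys.out_bound [Fintype V] (S : PotSys G t₀ lam R) {i : ℤ} {K : Set V}
    (hK : IsC G lam i K) (hR : K ⊆ R) {r : V} {F : Finset (Sym2 V)}
    (hF : Opt G t₀ lam r F) {X : Finset (Sym2 V)} (hX : ∀ e ∈ X, e ∈ G.edgeSet)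
    {U : V → ZMod 2} (hbd : bd X = res Kᶜ (bd F) + U)
    (hU : ∀ x, U x ≠ 0 → x ∉ K ∧ ∃ u ∈ K, G.Adj u x) : (outE K F).card ≤ X.card := by
  have hUR : ∀ x, U x ≠ 0 → x ∈ R := fun x hx => by
    obtain ⟨-, u, hu, hux⟩ := hU x hx
    exact S.closed u (hR hu) x hux
  have hcutR : ∀ Y : Finset (Sym2 V), (∀ e ∈ Y, e ∈ G.edgeSet) → cutE R Y = ∅ := by
    intro Y hY
    rw [Finset.eq_empty_iff_forall_notMem]
    intro e he
    obtain ⟨he, a, b, rfl, ha, hb⟩ := mem_cutE.1 he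
    exact hb (S.closed a ha b (hY _ he))
  have hEo : ∀ e ∈ outE K F, e ∈ G.edgeSet := fun e he => hF.edge e (outE_subset _ _ he)
  -- the edges outside `R` are compared by minimality of `F`
  have hfar : (outE R (outE K F)).card ≤ (outE R X).card := by
    have hsub : outE R (outE K F) ⊆ outE R F := outE_outE_subset K R F
    obtain ⟨f1, f2⟩ := bd_in_of_cut_empty (hcutR F hF.edge)
    obtain ⟨x1, x2⟩ := bd_in_of_cut_empty (hcutR X hX)
    obtain ⟨g1, g2⟩ := glue (inE_inE R F) (cutE_empty R) (outE_outE R X)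
    have h := S.le r _ (edge_union (fun e he => hF.edge e (inE_subset _ _ he)) edge_none
      (fun e he => hX e (outE_subset _ _ he))) (by
        rw [g2, f1, x2, bd_empty, ← hF.bd_eq, add_zero]
        rw [show res Rᶜ (bd X) = res Rᶜ (bd F) by
          funext w
          by_cases hw : w ∈ R
          · simp [res, hw]
          · have h0 : U w = 0 := by
              by_contra h
              exact hw (hUR w h)
            have hwK : w ∉ K := fun h => hw (hR h)
            simp [hbd, res, hw, h0, hwK]]
        exact res_add_compl R (bd F))
    have hFc := hF.card_eq
    have hp := parts_card R F
    rw [hcutR F hF.edge] at hp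
    rw [g1] at h
    simp only [Finset.card_empty] at hp h
    have := Finset.card_le_card hsub
    push_cast at h
    omega
  have hnear : (inE R (outE K F)).card ≤ (inE R X).card := by
    refine S.count hF ((inE_subset _ _).trans (outE_subset _ _)) (inE_inE _ _)
      (fun e he => hX e (inE_subset _ _ he)) ?_
    intro L j hL hLR hrL a ha b hb hab
    have haK : a ∉ K := (mem_outE.1 (mem_inE.1 hab).1).2.1
    suffices h1 : tot L (bd X) = tot L (bd F) by
      obtain ⟨a', ha', b', hb', h'⟩ := exists_cross (L := L) (J := X) (by
        rw [h1, hF.bd_eq, tot_add, S.tot_eq_one hL hLR, tot_pt_notMem hrL, add_zero]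
        exact one_ne_zero)
      exact ⟨a', ha', b', hb', mem_inE.2 ⟨h', hLR ha', S.closed a' (hLR ha') b' (hX _ h')⟩⟩
    by_cases hdis : ∃ x ∈ K, x ∈ L
    · obtain ⟨x, hxK, hxL⟩ := hdis
      have hij : i < j := by
        by_contra hji
        exact haK (hL.2.laminar hK.2 (by omega) hxL hxK ha)
      have hKL : K ⊆ L := hK.2.laminar hL.2 hij.le hxK hxL
      rw [tot_compl_bd L X, tot_compl_bd L F]
      refine tot_congr fun v hv => ?_
      have hvK : v ∉ K := fun h => hv (hKL h)
      have h0 : U v = 0 := by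
        by_contra h
        obtain ⟨-, u, hu, huv⟩ := hU v h
        have := S.cut_levels hK.2 hR hu hvK huv
        exact hv (hL.2.closed u (hKL hu) v huv (by omega))
      simp [hbd, res, h0, hvK]
    · push Not at hdis
      refine tot_congr fun v hv => ?_
      have hvK : v ∉ K := fun h => hdis v h hv
      have h0 : U v = 0 := by
        by_contra h
        obtain ⟨-, u, hu, huv⟩ := hU v h
        have := S.cut_levels hK.2 hR hu hvK huv
        have := hL.2.le v hv
        exact hdis u hu (hL.2.closed v hv u huv.symm (by omega))
      simp [hbd, res, h0, hvK]
  have h1 := parts_card R (outE K F)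
  have h2 := parts_card R X
  rw [hcutR _ hEo, Finset.card_empty] at h1
  omega

/-- The theorem in terms of potentials. Here `D x` is the minimum size of an edge set with
boundary `bd F + r' + x`, and `pq` is the beam of `K`. -/
lemma PotSys.main [Fintype V] (S : PotSys G t₀ lam R) {i : ℤ} {K : Set V}
    (hK : IsC G lam i K) (hR : K ⊆ R) {r r' p q : V} {F : Finset (Sym2 V)} (hr : r ∉ K)
    (hF : Opt G t₀ lam r F) (hp : p ∈ K) (hq : q ∉ K) (hpq : G.Adj p q)
    (hcut : cutE K F = {s(p, q)}) (hr' : r' ∉ K) {D : V → ℤ}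
    (hle : ∀ x J, (∀ e ∈ J, e ∈ G.edgeSet) → bd J = bd F + pt r' + pt x → D x ≤ (J.card : ℤ))
    (hat : ∀ x ∈ R, ∃ J : Finset (Sym2 V), (∀ e ∈ J, e ∈ G.edgeSet) ∧
      bd J = bd F + pt r' + pt x ∧ (J.card : ℤ) = D x)
    (hD : D p = D q - 1) {x y : V} (hx : x ∉ K) (hy : y ∈ K) (hyx : G.Adj y x) :
    D x = D p + 1 := by
  obtain ⟨B, hB⟩ := S.exists_split hR ⟨p, hp⟩ (S.tight hK hR)
  have hEo : ∀ e ∈ outE K F, e ∈ G.edgeSet := fun e he => hF.edge e (outE_subset _ _ he)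
  have hOut := bd_outE K F
  rw [hcut, bd_single, res_add Kᶜ (pt p), res_compl_pt_mem hp, res_compl_pt_notMem hq,
    zero_add] at hOut
  have hresK : res K t₀ = res K (bd F) := by
    rw [hF.bd_eq, res_add, res_pt_notMem hr, add_zero]
  have hpi := (S.cut_levels hK.2 hR hp hq hpq).1
  -- completion of an outer edge set by an inner one
  have hfill : ∀ u ∈ K, lam u = i → ∀ v, v ∉ K → G.Adj u v → ∀ w, ∀ Y : Finset (Sym2 V),
      (∀ e ∈ Y, e ∈ G.edgeSet) → outE K Y = Y → bd Y = res Kᶜ (bd F) + pt r' + pt v + pt w →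
      D w ≤ Y.card + 1 + (i - B.card) := by
    intro u hu hlu v hv huv w Y hY hYo hbd
    obtain ⟨I, i1, i2, i3, i4⟩ := hB.inner u hu
    obtain ⟨g1, g2⟩ := glue i2 (cutE_single hu hv) hYo
    have := hle w _ (edge_union i1 (edge_single huv) hY) (by
      rw [g2, i3, hbd, bd_single, hresK]
      funext z
      have := congrFun (res_add_compl K (bd F)) z
      simp only [Pi.add_apply] at this ⊢
      grind)
    rw [g1, Finset.card_singleton] at this
    push_cast at this
    omega
  -- The outer parts `O` and that of `F` are exchanged along a connection from `r'` to `s'`. By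
  -- `out_bound` the new outer set, whose boundary has `s'` in place of `U`, is no larger than `O`.
  -- If `s' = q`, an inner part completes it to a set for `p`; otherwise it is completed through
  -- `s'` to a set for `q`, and `D q = D p + 1`.
  have hlow : ∀ O : Finset (Sym2 V), (∀ e ∈ O, e ∈ G.edgeSet) → outE K O = O →
      ∀ U : V → ZMod 2, bd O = res Kᶜ (bd F) + pt r' + U →
      (∀ x, U x ≠ 0 → x ∉ K ∧ ∃ u ∈ K, G.Adj u x) → D p ≤ O.card + (i - B.card) := by
    intro O hO hOo U hbd hU
    have hD' : outE K (symmDiff O (outE K F)) = symmDiff O (outE K F) :=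
      outE_symmDiff hOo (outE_outE K F)
    have hED := edge_symmDiff hO hEo
    obtain ⟨J₁, hJ₁, s', hs', hbd₁⟩ := exists_connection (symmDiff O (outE K F)) r' (U + pt q) (by
      rw [bd_symmDiff, hbd, hOut]; funext w; simp only [Pi.add_apply]; grind)
    set J₂ := symmDiff O (outE K F) \ J₁ with hJ₂
    have hcard := card_toggle hJ₁
    rw [← hJ₂] at hcard
    have hbd₂ : bd J₂ = U + pt q + pt s' := by
      rw [hJ₂, bd_sdiff hJ₁, hbd₁, bd_symmDiff, hbd, hOut]
      funext w; simp only [Pi.add_apply]; grind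
    have hs'N : s' ≠ q → s' ∉ K ∧ ∃ u ∈ K, G.Adj u s' := fun h => by
      refine hU s' ?_
      simpa [pt_ne (Ne.symm h)] using hs'
    have hs'N' : s' ∉ K ∧ ∃ u ∈ K, G.Adj u s' := by
      by_cases h : s' = q
      · subst h; exact ⟨hq, p, hp, hpq⟩
      · exact hs'N h
    have c2 := S.out_bound hK hR hF (X := symmDiff (outE K F) J₂) (U := U + pt s')
      (edge_symmDiff hEo fun e he => hED e (Finset.sdiff_subset he))
      (by rw [bd_symmDiff, hOut, hbd₂]; funext w; simp only [Pi.add_apply]; grind)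
      (by
        intro z hz
        by_cases h : z = s'
        · rw [h]; exact hs'N'
        · exact hU z (by simpa [pt_ne (Ne.symm h)] using hz))
    have hY : ∀ e ∈ symmDiff (outE K F) J₁, e ∈ G.edgeSet :=
      edge_symmDiff hEo fun e he => hED e (hJ₁ he)
    have hYo : outE K (symmDiff (outE K F) J₁) = symmDiff (outE K F) J₁ :=
      outE_symmDiff (outE_outE K F) (outE_eq_of_subset hJ₁ hD')
    by_cases h : s' = q
    · subst h
      obtain ⟨I, i1, i2, i3, i4⟩ := hB.inner p hp
      obtain ⟨g1, g2⟩ := glue i2 (cutE_empty K) hYo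
      have := hle p _ (edge_union i1 edge_none hY) (by
        rw [g2, i3, bd_symmDiff, hOut, hbd₁, bd_empty, hresK]
        funext z
        have := congrFun (res_add_compl K (bd F)) z
        simp only [Pi.add_apply, Pi.zero_apply] at this ⊢
        grind)
      rw [g1, Finset.card_empty] at this
      push_cast at this
      omega
    · obtain ⟨hs'K, u, hu, hus⟩ := hs'N'
      have := hfill u hu (S.cut_levels hK.2 hR hu hs'K hus).1 s' hs'K hus q _ hY hYo (by
        rw [bd_symmDiff, hOut, hbd₁]; ring)
      omega
  -- ends of cut edges
  have hcutU : ∀ H : Finset (Sym2 V), (∀ e ∈ H, e ∈ G.edgeSet) → ∀ z, bd (cutE K H) z ≠ 0 →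
      (z ∈ K → lam z = i) ∧ (z ∉ K → ∃ u ∈ K, G.Adj u z) := by
    intro H hH z hz
    obtain ⟨b, hb⟩ := bd_ne_zero hz
    obtain ⟨hbH, a, c, hac, ha, hc⟩ := mem_cutE.1 hb
    have hadj : G.Adj z b := hH _ hbH
    rw [Sym2.eq_iff] at hac
    rcases hac with ⟨rfl, rfl⟩ | ⟨rfl, rfl⟩
    · exact ⟨fun _ => (S.cut_levels hK.2 hR ha hc hadj).1, fun h => absurd ha h⟩
    · exact ⟨fun h => absurd h hc, fun _ => ⟨_, ha, hadj.symm⟩⟩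
  have hinb : ∀ H : Finset (Sym2 V), (∀ e ∈ H, e ∈ G.edgeSet) → ∀ U : V → ZMod 2,
      bd (inE K H) = res K t₀ + U → (∀ x, U x ≠ 0 → x ∈ K ∧ lam x = i) →
      i - B.card ≤ (inE K H).card := fun H hH U h1 h2 =>
    S.in_bound hK hR hB (fun e he => hH e (inE_subset _ _ he)) h1 h2
  apply le_antisymm
  · obtain ⟨H, hH, hbd, hc⟩ := hat p (hR hp)
    have hi := bd_inE K H
    have ho := bd_outE K H
    rw [hbd, res_add, res_add, res_pt_mem hp, res_pt_notMem hr', ← hresK, add_zero] at hi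
    rw [hbd, res_add, res_add, res_compl_pt_mem hp, res_compl_pt_notMem hr', add_zero] at ho
    have c1 := hinb H hH (pt p + res K (bd (cutE K H))) (by rw [hi]; ring) (by
      intro z hz
      by_cases h : z = p
      · rw [h]; exact ⟨hp, hpi⟩
      · have hz' : res K (bd (cutE K H)) z ≠ 0 := by simpa [pt_ne (Ne.symm h)] using hz
        have hzK : z ∈ K := by
          by_contra h'
          exact hz' (by simp [res, h'])
        exact ⟨hzK, (hcutU H hH z (by simpa [res, hzK] using hz')).1 hzK⟩)
    have c2 := hlow _ (fun e he => hH e (outE_subset _ _ he)) (outE_outE K H) _ ho (by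
      intro z hz
      have hzK : z ∉ K := by
        intro h'
        exact hz (by simp [res, h'])
      exact ⟨hzK, (hcutU H hH z (by simpa [res, hzK] using hz)).2 hzK⟩)
    have hpc := parts_card K H
    -- the inner and outer bounds already add up to `D p`
    have h0 : cutE K H = ∅ := Finset.card_eq_zero.1 (by omega)
    rw [h0, bd_empty] at ho
    have hyi := (S.cut_levels hK.2 hR hy hx hyx).1
    have := hfill y hy hyi x hx hyx x _ (fun e he => hH e (outE_subset _ _ he)) (outE_outE K H) (by
      rw [ho, res_zero_of (f := 0) fun _ _ => rfl]
      funext w; simp only [Pi.add_apply, Pi.zero_apply]; grind)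
    rw [h0, Finset.card_empty] at hpc
    omega
  · obtain ⟨H, hH, hbd, hc⟩ := hat x (S.closed y (hR hy) x hyx)
    have hi := bd_inE K H
    have ho := bd_outE K H
    rw [hbd, res_add, res_add, res_pt_notMem hx, res_pt_notMem hr', ← hresK, add_zero,
      add_zero] at hi
    rw [hbd, res_add, res_add, res_compl_pt_notMem hx, res_compl_pt_notMem hr'] at ho
    have c1 := hinb H hH _ hi (by
      intro z hz
      have hzK : z ∈ K := by
        by_contra h'
        exact hz (by simp [res, h'])
      exact ⟨hzK, (hcutU H hH z (by simpa [res, hzK] using hz)).1 hzK⟩)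
    have c2 := hlow _ (fun e he => hH e (outE_subset _ _ he)) (outE_outE K H)
      (pt x + res Kᶜ (bd (cutE K H))) (by rw [ho]; ring) (by
        intro z hz
        by_cases h : z = x
        · rw [h]; exact ⟨hx, y, hy, hyx⟩
        · have hz' : res Kᶜ (bd (cutE K H)) z ≠ 0 := by simpa [pt_ne (Ne.symm h)] using hz
          have hzK : z ∉ K := by
            intro h'
            exact hz' (by simp [res, h'])
          exact ⟨hzK, (hcutU H hH z (by simpa [res, hzK] using hz')).2 hzK⟩)
    have hpc := parts_card K H
    -- the boundary of `H` is odd on `K`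
    have h1 : 1 ≤ (cutE K H).card := by
      obtain ⟨a, ha, b, hb, hab⟩ := exists_cross (L := K) (J := H) (by
        rw [hbd, hF.bd_eq, tot_add, tot_add, tot_add, S.tot_eq_one hK hR, tot_pt_notMem hr,
          tot_pt_notMem hr', tot_pt_notMem hx]
        simp)
      exact Finset.card_pos.2 ⟨_, mem_cutE_of hab ha hb⟩
    omega

end

/-! ### Distances as potentials -/

section
open Classical

variable {G : SimpleGraph V}

/-- The weight of a trail is the change of size of `F` under exchange along the trail. -/
lemma trail_toggle (F : Finset (Sym2 V)) {x y : V} (p : G.Walk x y) (hp : p.IsTrail) :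
    bd p.edges.toFinset = pt x + pt y ∧
      ((symmDiff F p.edges.toFinset).card : ℤ) = F.card + walkWt (F : Set (Sym2 V)) p := by
  induction p with
  | nil =>
    have h0 : symmDiff F ∅ = F := symmDiff_bot F
    simp [walkWt, bd_empty, chain_add_self, h0]
  | @cons u v w h p ih =>
    rw [Walk.isTrail_cons] at hp
    obtain ⟨h1, h2⟩ := ih hp.1
    have hnot : s(u, v) ∉ p.edges.toFinset := by simpa using hp.2
    rw [Walk.edges_cons, List.toFinset_cons]
    refine ⟨?_, ?_⟩
    · rw [bd_insert hnot, h1]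
      funext z; simp only [Pi.add_apply]; grind
    · have hw : walkWt (F : Set (Sym2 V)) (Walk.cons h p) =
          edgeWt (F : Set (Sym2 V)) s(u, v) + walkWt (F : Set (Sym2 V)) p := by
        simp [walkWt]
      rw [hw]
      by_cases hF : s(u, v) ∈ F
      · have hm : s(u, v) ∈ symmDiff F p.edges.toFinset :=
          Finset.mem_symmDiff.2 (.inl ⟨hF, hnot⟩)
        have he : symmDiff F (insert s(u, v) p.edges.toFinset) =
            (symmDiff F p.edges.toFinset).erase s(u, v) := by
          ext e
          simp only [Finset.mem_symmDiff, Finset.mem_insert, Finset.mem_erase]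
          by_cases h : e = s(u, v)
          · subst h; tauto
          · tauto
        have hc := Finset.card_erase_add_one hm
        rw [he, edgeWt, if_pos (by simpa using hF)]
        omega
      · have hm : s(u, v) ∉ symmDiff F p.edges.toFinset := by
          rw [Finset.mem_symmDiff]; tauto
        have he : symmDiff F (insert s(u, v) p.edges.toFinset) =
            insert s(u, v) (symmDiff F p.edges.toFinset) := by
          ext e
          simp only [Finset.mem_symmDiff, Finset.mem_insert]
          by_cases h : e = s(u, v)
          · subst h; tauto
          · tauto
        rw [he, Finset.card_insert_of_notMem hm, edgeWt, if_neg (by simpa using hF)]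
        push_cast
        omega

/-- An edge set with boundary `x + y` contains the edges of a path from `x` to `y`. -/
lemma exists_path_of_bd (J : Finset (Sym2 V)) (hJ : ∀ e ∈ J, e ∈ G.edgeSet) {x y : V}
    (h : bd J = pt x + pt y) : ∃ p : G.Walk x y, p.IsPath ∧ p.edges.toFinset ⊆ J := by
  suffices hw : ∃ p : G.Walk x y, ∀ e ∈ p.edges, e ∈ J by
    obtain ⟨p, hp⟩ := hw
    refine ⟨p.bypass, p.bypass_isPath, fun e he => hp e ?_⟩
    exact p.edges_bypass_subset_edges (by simpa using he)
  induction hn : J.card generalizing J x with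
  | zero =>
    rw [Finset.card_eq_zero] at hn
    subst hn
    by_cases hxy : y = x
    · subst hxy; exact ⟨.nil, by simp⟩
    · have h' := congrFun h x
      simp [bd_empty, pt_self, pt_ne hxy] at h'
  | succ n ih =>
    by_cases hxy : y = x
    · subst hxy; exact ⟨.nil, by simp⟩
    · have hs : bd J x ≠ 0 := by simp [h, pt_self, pt_ne hxy]
      obtain ⟨b, hb⟩ := bd_ne_zero hs
      obtain ⟨p, hp⟩ := ih (J.erase s(x, b)) (fun e he => hJ e (Finset.mem_of_mem_erase he))
        (x := b) (by rw [bd_erase hb, h]; funext z; simp only [Pi.add_apply]; grind)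
        (by rw [Finset.card_erase_of_mem hb, hn]; rfl)
      refine ⟨.cons (show G.Adj x b from hJ _ hb) p, fun e he => ?_⟩
      rw [Walk.edges_cons, List.mem_cons] at he
      rcases he with rfl | he
      · exact hb
      · exact Finset.mem_of_mem_erase (hp e he)

section dist
variable {F : Finset (Sym2 V)}

lemma bddBelow_wt (F : Finset (Sym2 V)) (x y : V) :
    BddBelow {n : ℤ | ∃ p : G.Walk x y, p.IsPath ∧ walkWt (F : Set (Sym2 V)) p = n} := by
  refine ⟨-F.card, ?_⟩
  rintro n ⟨p, hp, rfl⟩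
  have := (trail_toggle F p hp.isTrail).2
  omega

/-- The distance between `x` and `y`, shifted by the size of `F`, is a lower bound for the size of
edge sets with boundary `bd F + x + y`. -/
lemma dist_le (hmin : ∀ J : Finset (Sym2 V), (∀ e ∈ J, e ∈ G.edgeSet) → bd J = bd F →
      F.card ≤ J.card) (hFE : ∀ e ∈ F, e ∈ G.edgeSet) {x y : V} {J : Finset (Sym2 V)}
    (hJ : ∀ e ∈ J, e ∈ G.edgeSet) (hbd : bd J = bd F + pt x + pt y) :
    distF G (F : Set (Sym2 V)) x y + F.card ≤ (J.card : ℤ) := by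
  have hE := edge_symmDiff hJ hFE
  have hb : bd (symmDiff J F) = pt x + pt y := by
    rw [bd_symmDiff, hbd]; funext z; simp only [Pi.add_apply]; grind
  obtain ⟨p, hp, hsub⟩ := exists_path_of_bd _ hE hb
  obtain ⟨h1, h2⟩ := trail_toggle F p hp.isTrail
  have h3 : distF G (F : Set (Sym2 V)) x y ≤ walkWt (F : Set (Sym2 V)) p :=
    csInf_le (bddBelow_wt F x y) ⟨p, hp, rfl⟩
  have hc := card_toggle hsub
  have hm := hmin (symmDiff F (symmDiff J F \ p.edges.toFinset))
    (edge_symmDiff hFE fun e he => hE e (Finset.sdiff_subset he))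
    (by rw [bd_symmDiff, bd_sdiff hsub, hb, h1]; funext z; simp only [Pi.add_apply]; grind)
  omega

/-- Toggling a shortest path in `F` attains the bound of `dist_le`. -/
lemma dist_attain (hFE : ∀ e ∈ F, e ∈ G.edgeSet) {x y : V} (h : G.Reachable x y) :
    ∃ J : Finset (Sym2 V), (∀ e ∈ J, e ∈ G.edgeSet) ∧ bd J = bd F + pt x + pt y ∧
      (J.card : ℤ) = distF G (F : Set (Sym2 V)) x y + F.card := by
  obtain ⟨q⟩ := h
  obtain ⟨p, hp, hw⟩ := Int.csInf_mem
    (s := {n : ℤ | ∃ p : G.Walk x y, p.IsPath ∧ walkWt (F : Set (Sym2 V)) p = n})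
    ⟨_, q.bypass, q.bypass_isPath, rfl⟩ (bddBelow_wt F x y)
  obtain ⟨h1, h2⟩ := trail_toggle F p hp.isTrail
  refine ⟨symmDiff F p.edges.toFinset, edge_symmDiff hFE fun e he => ?_, ?_, ?_⟩
  · exact p.edges_subset_edgeSet (by simpa using he)
  · rw [bd_symmDiff, h1, add_assoc]
  · rw [h2, hw, add_comm]; rfl

/-- The infimum over an empty set of paths is the junk value `0`. -/
lemma dist_of_not_reachable {x y : V} (h : ¬ G.Reachable x y) :
    distF G (F : Set (Sym2 V)) x y = 0 := by
  have : {n : ℤ | ∃ p : G.Walk x y, p.IsPath ∧ walkWt (F : Set (Sym2 V)) p = n} = ∅ := by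
    rw [Set.eq_empty_iff_forall_notMem]
    rintro n ⟨p, -, -⟩
    exact h ⟨p⟩
  rw [distF, this]
  simp

end dist

/-- In a bipartite graph the parity of the size of an edge set is determined by its boundary on
one colour class. -/
lemma card_parity [Fintype V] (c : G.Coloring (Fin 2)) (J : Finset (Sym2 V))
    (hJ : ∀ e ∈ J, e ∈ G.edgeSet) : ((J.card : ℕ) : ZMod 2) = tot {v | c v = 0} (bd J) := by
  have hsum : tot {v | c v = 0} (bd J) = ∑ e ∈ J, tot {v | c v = 0} (bdE e) :=
    map_sum (AddMonoidHom.mk' (tot {v | c v = 0}) (tot_add _)) bdE J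
  rw [hsum, Finset.card_eq_sum_ones, Nat.cast_sum]
  refine Finset.sum_congr rfl fun e he => ?_
  induction e using Sym2.ind with
  | _ a b =>
    have hne : c a ≠ c b := c.valid (hJ _ he)
    rw [bdE_mk, tot_add]
    by_cases ha : c a = 0
    · have ha' : a ∈ {v | c v = 0} := ha
      have hb' : b ∉ {v | c v = 0} := fun h => hne (ha.trans (Eq.symm h))
      rw [tot_pt_mem ha', tot_pt_notMem hb']
      simp
    · have ha' : a ∉ {v | c v = 0} := ha
      have hb' : b ∈ {v | c v = 0} := show c b = 0 by omega
      rw [tot_pt_notMem ha', tot_pt_mem hb']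
      simp

/-- Distances from `r` in a bipartite graft form a potential system on the component of `r`. -/
lemma potSys [Fintype V] (hbip : G.Colorable 2) {F : Finset (Sym2 V)}
    (hmin : ∀ J : Finset (Sym2 V), (∀ e ∈ J, e ∈ G.edgeSet) → bd J = bd F → F.card ≤ J.card)
    (hFE : ∀ e ∈ F, e ∈ G.edgeSet) (r : V) :
    PotSys G (bd F + pt r) (fun x => distF G (F : Set (Sym2 V)) r x + F.card)
      {x | G.Reachable r x} where
  closed a ha b hab := Reachable.trans ha hab.reachable
  le x J hJ hbd := dist_le hmin hFE hJ hbd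
  attain x hx := dist_attain hFE hx
  ne a ha b hab heq := by
    obtain ⟨c⟩ := hbip
    obtain ⟨A, hA, hbA, hcA⟩ := dist_attain hFE ha
    obtain ⟨B, hB, hbB, hcB⟩ := dist_attain hFE (Reachable.trans ha hab.reachable)
    have hAB : A.card = B.card := by
      have : (A.card : ℤ) = B.card := by rw [hcA, hcB]; exact heq
      exact_mod_cast this
    have h1 := card_parity c A hA
    rw [hAB, card_parity c B hB, hbA, hbB, tot_add _ _ (pt b), tot_add _ _ (pt a)] at h1
    have h2 := card_parity c {s(a, b)} (edge_single hab)
    rw [bd_single, tot_add, Finset.card_singleton] at h2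
    have h3 := add_left_cancel h1
    rw [h3, CharTwo.add_self_eq_zero] at h2
    simp at h2

/-- The boundary records the parities of the degrees. -/
lemma bd_eq_degree {J : Finset (Sym2 V)} (hJ : ∀ e ∈ J, e ∈ G.edgeSet) (v : V) :
    bd J v = (({e ∈ (J : Set (Sym2 V)) | v ∈ e}.ncard : ℕ) : ZMod 2) := by
  have hset : {e ∈ (J : Set (Sym2 V)) | v ∈ e} = ((J.filter (v ∈ ·) : Finset (Sym2 V)) : Set _) := by
    ext e; simp
  rw [hset, Set.ncard_coe_finset, bd, Finset.sum_apply, Finset.card_filter, Nat.cast_sum]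
  refine Finset.sum_congr rfl fun e he => ?_
  induction e using Sym2.ind with
  | _ a b =>
    have hab : a ≠ b := G.ne_of_adj (hJ _ he)
    rw [bdE_mk, Pi.add_apply]
    by_cases h1 : v = a
    · subst h1
      simp [pt_self, pt_ne hab.symm]
    · by_cases h2 : v = b
      · subst h2
        simp [pt_self, pt_ne hab]
      · simp [pt_ne (Ne.symm h1), pt_ne (Ne.symm h2), h1, h2]

/-- A minimum join has minimum size among the edge sets with the same boundary. -/
lemma IsMinJoin.min {T : Set V} {F : Finset (Sym2 V)} (hF : IsMinJoin G T (F : Set (Sym2 V))) :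
    (∀ e ∈ F, e ∈ G.edgeSet) ∧ ∀ J : Finset (Sym2 V), (∀ e ∈ J, e ∈ G.edgeSet) →
      bd J = bd F → F.card ≤ J.card := by
  have hFE : ∀ e ∈ F, e ∈ G.edgeSet := fun e he => hF.1.1 he
  refine ⟨hFE, fun J hJ hbd => ?_⟩
  have hJj : IsJoin G T (J : Set (Sym2 V)) := by
    refine ⟨fun e he => hJ e he, fun v => ?_⟩
    rw [← hF.1.2 v, ← ZMod.natCast_eq_one_iff_odd, ← ZMod.natCast_eq_one_iff_odd,
      ← bd_eq_degree hJ, ← bd_eq_degree hFE, hbd]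
  have h1 := hF.2
  have h2 : nu G T ≤ (J : Set (Sym2 V)).ncard := Nat.sInf_le ⟨_, hJj, rfl⟩
  rwa [← h1, Set.ncard_coe_finset, Set.ncard_coe_finset] at h2

/-- A vertex set that meets a connected set `K` and is closed under adjacency in `K` contains
`K`. -/
lemma subset_of_connected {K : Set V} (hK : (G.induce K).Connected) (P : Set V)
    (h : ∃ x ∈ K, x ∈ P) (hP : ∀ x ∈ K, ∀ y ∈ K, G.Adj x y → x ∈ P → y ∈ P) : K ⊆ P := by
  obtain ⟨x, hxK, hxP⟩ := h
  intro y hy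
  obtain ⟨p⟩ := hK.preconnected ⟨x, hxK⟩ ⟨y, hy⟩
  have key : ∀ {a b : K}, (G.induce K).Walk a b → (a : V) ∈ P → (b : V) ∈ P := by
    intro a b q
    induction q with
    | nil => exact id
    | cons hadj _ ih => exact fun ha => ih (hP _ (Subtype.property _) _ (Subtype.property _) hadj ha)
  exact key p hxP

end

/-! ### Distances from a congruent vertex -/

/-- With `K` a decapital distance component w.r.t. `r`, `F`-root `rK`,
and `r' ∉ K` `K`-congruent to `r`: for every vertex `x` outside `K` adjacent in `G`
to a vertex of `K`, `dist_F(r', x) = dist_F(r', rK) + 1`. -/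
theorem stmt_5 {V : Type*} [Fintype V] [DecidableEq V]
    (G : SimpleGraph V) (T : Set V) (hbip : G.Colorable 2) (hgraft : IsGraft G T)
    (F : Set (Sym2 V)) (hF : IsMinJoin G T F)
    (r : V) (K : Set V) (hK : IsDecapDistComp G F r K)
    (rK sK : V) (hadj : G.Adj rK sK) (hbeam : s(rK, sK) ∈ F)
    (hrK : rK ∈ K) (hsK : sK ∉ K)
    (r' : V) (hr' : r' ∉ K)
    (hcong : distF G F r' rK = distF G F r' sK - 1) :
    ∀ x : V, x ∉ K → (∃ y ∈ K, G.Adj x y) →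
      distF G F r' x = distF G F r' rK + 1 := by
  rintro x hx ⟨y, hy, hxy⟩
  lift F to Finset (Sym2 V) using F.toFinite
  obtain ⟨hFE, hmin⟩ := hF.min
  obtain ⟨i, ⟨-, hne, hKi, hconn, hclosed⟩, hrK'⟩ := hK
  have S := potSys hbip hmin hFE r
  have hsKi : ¬ distF G (F : Set (Sym2 V)) r sK ≤ i := fun h => hsK (hclosed rK hrK sK h hadj)
  have hrKi : distF G (F : Set (Sym2 V)) r rK ≤ i := hKi hrK
  -- off the component of `r`, both ends of the beam would have the junk distance `0`
  have hreach : G.Reachable r rK := by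
    by_contra h
    have h' : ¬ G.Reachable r sK := fun h' => h (h'.trans hadj.symm.reachable)
    rw [dist_of_not_reachable h'] at hsKi
    rw [dist_of_not_reachable h] at hrKi
    exact hsKi hrKi
  have hreach' : G.Reachable r' rK := by
    by_contra h
    have h' : ¬ G.Reachable r' sK := fun h' => h (h'.trans hadj.symm.reachable)
    rw [dist_of_not_reachable h', dist_of_not_reachable h] at hcong
    omega
  have hR : K ⊆ {x | G.Reachable r x} :=
    subset_of_connected hconn _ ⟨rK, hrK, hreach⟩ fun a _ b _ hab ha =>
      Reachable.trans ha hab.reachable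
  have hpre : IsPre G (fun x => distF G (F : Set (Sym2 V)) r x + F.card) (i + F.card) K := by
    refine ⟨fun a ha => ?_, fun a ha b hab hb => hclosed a ha b ?_ hab,
      subset_of_connected hconn⟩
    · have : distF G (F : Set (Sym2 V)) r a ≤ i := hKi ha
      omega
    · show distF G (F : Set (Sym2 V)) r b ≤ i
      omega
  have hC : IsC G (fun x => distF G (F : Set (Sym2 V)) r x + F.card) (i + F.card) K :=
    ⟨⟨rK, hrK, (S.cut_levels hpre hR hrK hsK hadj).1⟩, hpre⟩
  have hbdF : bd F = bd F + pt r + pt r := by rw [add_assoc, chain_add_self, add_zero]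
  have hFr : Opt G (bd F + pt r) (fun x => distF G (F : Set (Sym2 V)) r x + F.card) r F := by
    refine ⟨hFE, hbdF, le_antisymm ?_ (dist_le hmin hFE hFE hbdF)⟩
    obtain ⟨J, hJ, hb, hc⟩ := dist_attain hFE (Reachable.refl (G := G) r)
    rw [← hc]
    exact_mod_cast hmin J hJ (hb.trans hbdF.symm)
  have hcut : cutE K F = {s(rK, sK)} := by
    obtain ⟨u, -, v, -, -, -, h⟩ := S.unique_cut hC hR (S.tight hC hR) hrK' hFr
    have hm := mem_cutE_of (J := F) (by simpa using hbeam) hrK hsK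
    rw [h, Finset.mem_singleton] at hm
    rw [h, hm]
  have hfin := S.main hC hR hrK' hFr hrK hsK hadj hcut hr'
    (D := fun x => distF G (F : Set (Sym2 V)) r' x + F.card)
    (fun _ _ hJ hb => dist_le hmin hFE hJ hb)
    (fun z hz => dist_attain hFE ((hreach'.trans hreach.symm).trans hz))
    (by omega) hx hy hxy.symm
  omega
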